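/- arXiv:1903.00429 — 4 statements merged into one kernel-verified Lean document; each statement's English description precedes it below -/
import Mathlib

section
/- Let (u₀^m)_{m∈ℕ} ⊆ C be a sequence converging in H to some u₀ ∈ C, and suppose that for each m ∈ ℕ there is an Obstacle Gradient Flow (u_m(t))_{t≥0} with initial datum u₀^m. Then there exists an Obstacle Gradient Flow (u(t))_{t≥0} with initial datum u₀ such that u_m → u in C([0,T],H) (uniformly on [0,T]) for every T > 0. Consequently, the set of initial data in C for which an Obstacle Gradient Flow exists is a closed subset of C. -/
open MeasureTheory Set Filter

noncomputable section

local notation "⟪" x ", " y "⟫" => @inner ℝ _ _ x y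

variable {H : Type*} [NormedAddCommGroup H] [InnerProductSpace ℝ H] [CompleteSpace H]

/-- Assumption 1: `E` is Fréchet differentiable with (Riesz) gradient `E'`, the gradient is
locally Lipschitz, `E` is sequentially weakly lower semicontinuous, bounded below by `α`,
and the gradient is bounded on balls. -/
structure Assumption1 (E : H → ℝ) (E' : H → H) (α : ℝ) : Prop where
  grad : ∀ u : H, HasGradientAt E (E' u) u
  locLip : LocallyLipschitz E'
  wlsc : ∀ (x : ℕ → H) (y : H),
    (∀ φ : H, Tendsto (fun n => ⟪x n, φ⟫) atTop (nhds ⟪y, φ⟫)) →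
    E y ≤ Filter.liminf (fun n => E (x n)) atTop
  lowerBound : ∀ u : H, α ≤ E u
  gradBdd : ∀ R : ℝ, 0 < R → ∃ M : ℝ, ∀ w : H, ‖w‖ ≤ R → ‖E' w‖ ≤ M

/-- An Obstacle Gradient Flow `u` (with a.e. derivative `u'`) with initial datum `u₀ ∈ C`. -/
structure IsOGF (C : Set H) (E' : H → H) (u u' : ℝ → H) (u₀ : H) : Prop where
  init : u 0 = u₀
  mem : ∀ t : ℝ, 0 ≤ t → u t ∈ C
  derivAe : ∀ᵐ t ∂(volume.restrict (Ioi (0:ℝ))), HasDerivAt u (u' t) t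
  sqInt : ∀ T : ℝ, 0 < T → IntegrableOn (fun t => ‖u' t‖ ^ 2) (Ioc 0 T)
  ftc : ∀ s t : ℝ, 0 ≤ s → s ≤ t → u t - u s = ∫ r in s..t, u' r
  fvi : ∀ᵐ t ∂(volume.restrict (Ioi (0:ℝ))),
    ∀ v ∈ C, 0 ≤ ⟪u' t, v - u t⟫ + ⟪E' (u t), v - u t⟫

/-- Assumption 2: a gradient growth condition with a nondecreasing continuous modulus `ζ`. -/
structure Assumption2 (E' : H → H) (ζ : ℝ → ℝ) : Prop where
  mono : MonotoneOn ζ (Ici 0)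
  cont : ContinuousOn ζ (Ici 0)
  nonneg : ∀ r : ℝ, 0 ≤ r → 0 ≤ ζ r
  bound : ∀ u v : H, ‖E' u - E' v‖ ≤ ζ (‖u‖ + ‖v‖) * ‖u - v‖

theorem aux_ac_le {g φ : ℝ → ℝ} {a b : ℝ} (hab : a ≤ b)
    (hg : AbsolutelyContinuousOnInterval g a b) (hφ : IntervalIntegrable φ volume a b)
    (h : ∀ᵐ t, t ∈ Ioc a b → ∃ d, HasDerivAt g d t ∧ d ≤ φ t) :
    g b - g a ≤ ∫ t in a..b, φ t := by
  rw [← hg.integral_deriv_eq_sub]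
  refine intervalIntegral.integral_mono_ae_restrict hab hg.intervalIntegrable_deriv hφ ?_
  rw [← restrict_Ioc_eq_restrict_Icc]
  rw [EventuallyLE, ae_restrict_iff' measurableSet_Ioc]
  filter_upwards [h] with t ht hm
  obtain ⟨d, hd, hle⟩ := ht hm
  rw [hd.deriv]; exact hle

theorem aux_ac_lip {X : Type*} [PseudoMetricSpace X] {f : ℝ → X} {a b M : ℝ} (hab : a ≤ b)
    (h : ∀ s ∈ Icc a b, ∀ t ∈ Icc a b, dist (f s) (f t) ≤ M * dist s t) :
    AbsolutelyContinuousOnInterval f a b := by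
  apply LipschitzOnWith.absolutelyContinuousOnInterval (K := Real.toNNReal M)
  rw [uIcc_of_le hab]
  apply LipschitzOnWith.of_dist_le_mul
  intro s hs t ht
  refine (h s hs t ht).trans ?_
  gcongr
  exact Real.le_coe_toNNReal M

theorem aux_ac_norm_sq {w : ℝ → H} {a b : ℝ} {M : ℝ} (hab : a ≤ b)
    (h : ∀ s ∈ Icc a b, ∀ t ∈ Icc a b, ‖w s - w t‖ ≤ M * dist s t) :
    AbsolutelyContinuousOnInterval (fun t => ‖w t‖ ^ 2) a b := by
  have h1 : AbsolutelyContinuousOnInterval (fun t => ‖w t‖) a b := by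
    apply aux_ac_lip hab (M := M)
    intro s hs t ht
    rw [Real.dist_eq]
    exact (abs_norm_sub_norm_le _ _).trans (h s hs t ht)
  simpa [pow_two] using h1.fun_mul h1

section flow
variable {C : Set H} {E' : H → H} {u u' : ℝ → H} {u₀ : H}

theorem aux_deriv (h : IsOGF C E' u u' u₀) : ∀ᵐ t : ℝ, 0 < t → HasDerivAt u (u' t) t := by
  have := h.derivAe
  rwa [ae_restrict_iff' measurableSet_Ioi] at this

theorem aux_fvi (h : IsOGF C E' u u' u₀) : ∀ᵐ t : ℝ, 0 < t →
    ∀ v ∈ C, 0 ≤ ⟪u' t, v - u t⟫ + ⟪E' (u t), v - u t⟫ := by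
  have := h.fvi
  rwa [ae_restrict_iff' measurableSet_Ioi] at this

theorem aux_aesm (h : IsOGF C E' u u' u₀) (T : ℝ) :
    AEStronglyMeasurable u' (volume.restrict (Ioc 0 T)) := by
  have h1 : AEStronglyMeasurable u' (volume.restrict (Ioi 0)) := by
    refine (aestronglyMeasurable_deriv u _).congr ?_
    filter_upwards [h.derivAe] with t ht
    exact ht.deriv
  exact h1.mono_measure (Measure.restrict_mono Ioc_subset_Ioi_self le_rfl)

theorem aux_intg (h : IsOGF C E' u u' u₀) {s t : ℝ} (hs : 0 ≤ s) (hst : s ≤ t) :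
    IntervalIntegrable u' volume s t := by
  rw [intervalIntegrable_iff_integrableOn_Ioc_of_le hst]
  rcases eq_or_lt_of_le (hs.trans hst) with h0 | h0
  · have : s = t := by linarith
    simp [this]
  have : MemLp u' 2 (volume.restrict (Ioc 0 t)) :=
    (memLp_two_iff_integrable_sq_norm (aux_aesm h t)).2 (h.sqInt t h0)
  have h1 : IntegrableOn u' (Ioc 0 t) := this.integrable (by norm_num)
  exact h1.mono_set (Ioc_subset_Ioc_left hs)

theorem aux_cont (h : IsOGF C E' u u' u₀) {T : ℝ} (hT : 0 ≤ T) : ContinuousOn u (Icc 0 T) := by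
  have h1 := intervalIntegral.continuousOn_primitive_interval' (a := 0)
    (aux_intg h le_rfl hT) (by simp)
  rw [uIcc_of_le hT] at h1
  refine (h1.const_add (u 0)).congr ?_
  intro t ht
  have := h.ftc 0 t le_rfl ht.1
  simp only
  rw [← this]; abel

theorem aux_diss (h : IsOGF C E' u u' u₀) :
    ∀ᵐ t : ℝ, 0 < t → HasDerivAt u (u' t) t ∧ ‖u' t‖ ^ 2 = - ⟪E' (u t), u' t⟫ := by
  filter_upwards [aux_deriv h, aux_fvi h] with t h1 h2 ht
  refine ⟨h1 ht, ?_⟩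
  have hd : HasDerivAt (fun r => ⟪u' t + E' (u t), u r - u t⟫) ⟪u' t + E' (u t), u' t⟫ t := by
    have := HasDerivAt.inner ℝ (hasDerivAt_const t (u' t + E' (u t))) ((h1 ht).sub_const (u t))
    simpa using this
  have hm : IsLocalMin (fun r => ⟪u' t + E' (u t), u r - u t⟫) t := by
    filter_upwards [Ioi_mem_nhds ht] with r hr
    have := h2 ht (u r) (h.mem r (le_of_lt hr))
    simpa [inner_add_left] using this
  have := hm.hasDerivAt_eq_zero hd
  rw [inner_add_left, real_inner_self_eq_norm_sq] at this
  linarith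

theorem aux_speed (h : IsOGF C E' u u' u₀) :
    ∀ᵐ t : ℝ, 0 < t → ‖u' t‖ ≤ ‖E' (u t)‖ := by
  filter_upwards [aux_diss h] with t h1 ht
  have h2 := (h1 ht).2
  have h3 := abs_real_inner_le_norm (E' (u t)) (u' t)
  have h4 := neg_abs_le ⟪E' (u t), u' t⟫
  by_contra! hc
  nlinarith [norm_nonneg (u' t), norm_nonneg (E' (u t))]

theorem aux_lip (h : IsOGF C E' u u' u₀) {T M : ℝ}
    (hM : ∀ t ∈ Icc 0 T, ‖E' (u t)‖ ≤ M) :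
    ∀ s ∈ Icc 0 T, ∀ t ∈ Icc 0 T, ‖u s - u t‖ ≤ M * dist s t := by
  have key : ∀ s ∈ Icc 0 T, ∀ t ∈ Icc 0 T, s ≤ t → ‖u t - u s‖ ≤ M * dist s t := by
    intro s hs t ht hst
    rw [h.ftc s t hs.1 hst, dist_comm, Real.dist_eq]
    apply intervalIntegral.norm_integral_le_of_norm_le_const_ae
    filter_upwards [aux_speed h] with r hr hm
    rw [uIoc_of_le hst] at hm
    have h0 : 0 < r := hs.1.trans_lt hm.1
    exact (hr h0).trans (hM r ⟨h0.le, hm.2.trans ht.2⟩)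
  intro s hs t ht
  rcases le_total s t with hst | hst
  · rw [norm_sub_rev]; exact key s hs t ht hst
  · rw [dist_comm]; exact key t ht s hs hst

theorem aux_energy {E : H → ℝ} {α : ℝ} (hE : Assumption1 E E' α)
    (h : IsOGF C E' u u' u₀) {T : ℝ} (hT : 0 ≤ T) :
    ‖u T - u₀‖ ≤ (T + (E u₀ - α)) / 2 := by
  obtain ⟨R, hR⟩ := isCompact_Icc.exists_bound_of_continuousOn (aux_cont h hT)
  obtain ⟨M, hM⟩ := hE.gradBdd (max R 1) (by positivity)
  have hM0 : 0 ≤ M := (norm_nonneg _).trans (hM 0 (by simp))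
  have hR' : ∀ t ∈ Icc 0 T, ‖u t‖ ≤ max R 1 := fun t ht => (hR t ht).trans (le_max_left _ _)
  have hlip := aux_lip h (fun t ht => hM _ (hR' t ht))
  have hac : AbsolutelyContinuousOnInterval (fun t => E (u t)) 0 T := by
    apply aux_ac_lip hT (M := M * M)
    intro s hs t ht
    have := Convex.norm_image_sub_le_of_norm_hasFDerivWithin_le (f := E) (C := M)
      (s := Metric.closedBall 0 (max R 1)) (x := u t) (y := u s)
      (fun x _ => (hE.grad x).hasFDerivAt.hasFDerivWithinAt)
      (fun x hx => by
        rw [LinearIsometryEquiv.norm_map]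
        exact hM x (by simpa using hx)) (convex_closedBall _ _)
      (by simpa using hR' t ht) (by simpa using hR' s hs)
    rw [dist_eq_norm, mul_assoc]
    exact this.trans (mul_le_mul_of_nonneg_left (hlip s hs t ht) hM0)
  have hsq : IntervalIntegrable (fun t => ‖u' t‖ ^ 2) volume 0 T := by
    rcases eq_or_lt_of_le hT with h0 | h0
    · simp [← h0]
    rw [intervalIntegrable_iff_integrableOn_Ioc_of_le hT]
    exact h.sqInt T h0
  have h1 := aux_ac_le hT hac hsq.neg (by
    filter_upwards [aux_diss h] with t ht hm
    obtain ⟨a, b⟩ := ht hm.1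
    refine ⟨_, (hE.grad (u t)).hasFDerivAt.comp_hasDerivAt t a, ?_⟩
    simp [b])
  simp only [Pi.neg_apply, intervalIntegral.integral_neg, h.init] at h1
  have h2 : ‖∫ t in (0:ℝ)..T, u' t‖ ≤ ∫ t in (0:ℝ)..T, (1 / 2 + 1 / 2 * ‖u' t‖ ^ 2) := by
    apply intervalIntegral.norm_integral_le_of_norm_le hT
    · filter_upwards with t _
      nlinarith [sq_nonneg (‖u' t‖ - 1)]
    · exact intervalIntegrable_const.add (hsq.const_mul _)
  rw [← h.ftc 0 T le_rfl hT, h.init, intervalIntegral.integral_add intervalIntegrable_const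
    (hsq.const_mul _), intervalIntegral.integral_const_mul] at h2
  simp at h2
  have := hE.lowerBound (u T)
  linarith

theorem aux_evi (h : IsOGF C E' u u' u₀) (hc : Continuous E') {T M : ℝ}
    (hM : ∀ t ∈ Icc 0 T, ‖E' (u t)‖ ≤ M) {s t : ℝ} (hs : 0 ≤ s) (hst : s ≤ t) (htT : t ≤ T)
    {p : H} (hp : p ∈ C) :
    ‖p - u t‖ ^ 2 - ‖p - u s‖ ^ 2 ≤ ∫ r in s..t, 2 * ⟪E' (u r), p - u r⟫ := by
  have hcont := aux_cont h (hs.trans (hst.trans htT))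
  have hsub : Icc s t ⊆ Icc 0 T := Icc_subset_Icc hs htT
  have hlip := aux_lip h hM
  apply aux_ac_le (g := fun r => ‖p - u r‖ ^ 2) hst
  · apply aux_ac_norm_sq hst (M := M)
    intro a ha b hb
    have := hlip b (hsub hb) a (hsub ha)
    rw [dist_comm]
    simpa using this
  · apply ContinuousOn.intervalIntegrable
    rw [uIcc_of_le hst]
    have h1 := hcont.mono hsub
    have h2 := hc.comp_continuousOn h1
    exact continuousOn_const.mul (h2.inner (continuousOn_const.sub h1))
  · filter_upwards [aux_deriv h, aux_fvi h] with r h1 h2 hr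
    have h0 : 0 < r := hs.trans_lt hr.1
    refine ⟨_, ((h1 h0).const_sub p).norm_sq, ?_⟩
    have := h2 h0 p hp
    rw [inner_neg_right, real_inner_comm]
    linarith

theorem aux_gronwall {ζ : ℝ → ℝ} (hζ : Assumption2 E' ζ) {v v' : ℝ → H} {v₀ : H}
    (h : IsOGF C E' u u' u₀) (k : IsOGF C E' v v' v₀) {T M R : ℝ}
    (hM : ∀ t ∈ Icc 0 T, ‖E' (u t)‖ ≤ M) (kM : ∀ t ∈ Icc 0 T, ‖E' (v t)‖ ≤ M)
    (hR : ∀ t ∈ Icc 0 T, ‖u t‖ ≤ R) (kR : ∀ t ∈ Icc 0 T, ‖v t‖ ≤ R) :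
    ∀ t ∈ Icc 0 T, ‖u t - v t‖ ≤ Real.exp (ζ (2 * R) * T) * ‖u₀ - v₀‖ := by
  intro t ht
  set L := ζ (2 * R) with hL
  have hR0 : 0 ≤ R := (norm_nonneg _).trans (hR t ht)
  have hL0 : 0 ≤ L := hζ.nonneg _ (by positivity)
  have hsub : Icc 0 t ⊆ Icc 0 T := Icc_subset_Icc le_rfl ht.2
  have hac1 : AbsolutelyContinuousOnInterval (fun r => ‖u r - v r‖ ^ 2) 0 t := by
    apply aux_ac_norm_sq ht.1 (M := M + M)
    intro a ha b hb
    have h1 := aux_lip h hM a (hsub ha) b (hsub hb)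
    have h2 := aux_lip k kM a (hsub ha) b (hsub hb)
    calc ‖u a - v a - (u b - v b)‖ = ‖(u a - u b) - (v a - v b)‖ := by congr 1; abel
      _ ≤ ‖u a - u b‖ + ‖v a - v b‖ := norm_sub_le _ _
      _ ≤ _ := by linarith
  have hac2 : AbsolutelyContinuousOnInterval (fun r => Real.exp (-(2 * L) * r)) 0 t := by
    apply ContDiffOn.absolutelyContinuousOnInterval
    apply ContDiff.contDiffOn
    fun_prop
  have key := aux_ac_le (φ := fun _ => 0) ht.1 (hac2.fun_mul hac1) intervalIntegrable_const (by
    filter_upwards [aux_deriv h, aux_deriv k, aux_fvi h, aux_fvi k] with r h1 k1 h2 k2 hr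
    have h0 : 0 < r := hr.1
    have hrT : r ∈ Icc 0 T := hsub ⟨h0.le, hr.2⟩
    have e1 : HasDerivAt (fun r => Real.exp (-(2 * L) * r))
        (Real.exp (-(2 * L) * r) * (-(2 * L) * 1)) r :=
      ((hasDerivAt_id r).const_mul _).exp
    refine ⟨_, e1.mul ((h1 h0).sub (k1 h0)).norm_sq, ?_⟩
    have a1 := h2 h0 (v r) (k.mem r h0.le)
    have a2 := k2 h0 (u r) (h.mem r h0.le)
    have a3 : ⟪E' (v r) - E' (u r), u r - v r⟫ ≤ L * ‖u r - v r‖ ^ 2 := by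
      refine (real_inner_le_norm _ _).trans ?_
      rw [pow_two, ← mul_assoc]
      gcongr
      rw [norm_sub_rev]
      refine (hζ.bound _ _).trans ?_
      gcongr
      apply hζ.mono
      · exact add_nonneg (norm_nonneg _) (norm_nonneg _)
      · exact mul_nonneg zero_le_two hR0
      · linarith [hR r hrT, kR r hrT]
    have a4 : ⟪u r - v r, u' r - v' r⟫ ≤ L * ‖u r - v r‖ ^ 2 := by
      rw [real_inner_comm]
      rw [← neg_sub (u r) (v r), inner_neg_right, inner_neg_right] at a1
      rw [inner_sub_left] at a3 ⊢
      linarith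
    have := Real.exp_pos (-(2 * L) * r)
    simp only [Pi.sub_apply]
    nlinarith)
  simp only [intervalIntegral.integral_zero, mul_zero, Real.exp_zero, one_mul, h.init, k.init]
    at key
  have hT : 0 ≤ T := ht.1.trans ht.2
  have hsq : ‖u t - v t‖ ^ 2 ≤ (Real.exp (L * t) * ‖u₀ - v₀‖) ^ 2 := by
    rw [mul_pow, ← Real.exp_nat_mul]
    have e2 : Real.exp (((2 : ℕ) : ℝ) * (L * t)) * Real.exp (-(2 * L) * t) = 1 := by
      rw [← Real.exp_add]; simp; ring
    have e3 := Real.exp_pos (((2 : ℕ) : ℝ) * (L * t))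
    nlinarith
  have := abs_le_of_sq_le_sq hsq (by positivity)
  refine (le_abs_self _).trans (this.trans ?_)
  gcongr
  exact ht.2

end flow
theorem aux_weak {T M : ℝ} (hM : 0 ≤ M) (V : ℕ → ℝ → H)
    (hV : ∀ m, AEStronglyMeasurable (V m) (volume.restrict (Ioc 0 T)))
    (hb : ∀ m, ∀ᵐ t ∂(volume.restrict (Ioc 0 T)), ‖V m t‖ ≤ M) (u : ℝ → H)
    (hu : ∀ s t, 0 ≤ s → s ≤ t → t ≤ T →
      Tendsto (fun m => ∫ r in s..t, V m r) atTop (nhds (u t - u s))) :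
    ∃ v : ℝ → H, MemLp v 2 (volume.restrict (Ioc 0 T)) ∧
      ∀ s t, 0 ≤ s → s ≤ t → t ≤ T → u t - u s = ∫ r in s..t, v r := by
  set μ : Measure ℝ := volume.restrict (Ioc 0 T) with hμ
  have hfin : IsFiniteMeasure μ := by rw [hμ]; infer_instance
  have hmem : ∀ m, MemLp (V m) 2 μ := fun m => MemLp.of_bound (hV m) M (hb m)
  let F : ℕ → Lp H 2 μ := fun m => (hmem m).toLp
  obtain ⟨K, hK⟩ : ∃ K : ℝ, ∀ m, ‖F m‖ ≤ K := by
    refine ⟨_, fun m => Lp.norm_le_of_ae_bound hM ?_⟩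
    filter_upwards [hb m, (hmem m).coeFn_toLp] with t h1 h2
    rw [h2]; exact h1
  let G : ℕ → WeakDual ℝ (Lp H 2 μ) := fun m =>
    StrongDual.toWeakDual (InnerProductSpace.toDual ℝ (Lp H 2 μ) (F m))
  have hcpt := WeakDual.isCompact_closedBall (𝕜 := ℝ) (E := Lp H 2 μ) 0 K
  obtain ⟨g, -, hg⟩ := hcpt.ultrafilter_le_nhds ((hyperfilter ℕ).map G) (by
    rw [le_principal_iff]
    apply mem_map.2
    filter_upwards with m
    simp only [mem_preimage, Metric.mem_closedBall, dist_zero_right]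
    change ‖InnerProductSpace.toDual ℝ (Lp H 2 μ) (F m)‖ ≤ K
    rw [LinearIsometryEquiv.norm_map]
    exact hK m)
  let w : Lp H 2 μ := (InnerProductSpace.toDual ℝ (Lp H 2 μ)).symm (WeakDual.toStrongDual g)
  have hw : ∀ f : Lp H 2 μ, Tendsto (fun m => ⟪F m, f⟫) (hyperfilter ℕ : Filter ℕ)
      (nhds ⟪w, f⟫) := by
    intro f
    have h1 := ((WeakDual.eval_continuous (𝕜 := ℝ) f).tendsto g).comp hg
    have h2 : ⟪w, f⟫ = g f := by
      simp only [w, InnerProductSpace.toDual_symm_apply]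
      rfl
    rw [h2]
    exact h1
  refine ⟨w, Lp.memLp w, ?_⟩
  intro s t hs hst htT
  have hset : ∀ f : ℝ → H, ∫ x in Ioc s t, f x ∂μ = ∫ r in s..t, f r := by
    intro f
    rw [intervalIntegral.integral_of_le hst, hμ, Measure.restrict_restrict measurableSet_Ioc,
      inter_eq_left.2 (Ioc_subset_Ioc hs htT)]
  have hVF : ∀ m, ∫ x in Ioc s t, F m x ∂μ = ∫ r in s..t, V m r := by
    intro m
    rw [← hset]
    apply integral_congr_ae
    exact ae_restrict_of_ae (hmem m).coeFn_toLp
  apply ext_inner_left ℝ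
  intro c
  have h1 := hw (indicatorConstLp 2 (measurableSet_Ioc (a := s) (b := t)) (measure_ne_top μ _) c)
  have h2 : ∀ f : Lp H 2 μ, ⟪f, indicatorConstLp 2 (measurableSet_Ioc (a := s) (b := t))
      (measure_ne_top μ _) c⟫ = ⟪c, ∫ x in Ioc s t, f x ∂μ⟫ := by
    intro f
    rw [real_inner_comm]
    exact L2.inner_indicatorConstLp_eq_inner_setIntegral ℝ _ _ c f
  simp only [h2, hVF, hset] at h1
  have h3 : Tendsto (fun m => ⟪c, ∫ r in s..t, V m r⟫) (hyperfilter ℕ : Filter ℕ)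
      (nhds ⟪c, u t - u s⟫) :=
    (tendsto_const_nhds.inner (hu s t hs hst htT)).mono_left Nat.hyperfilter_le_atTop
  exact tendsto_nhds_unique h3 h1

theorem aux_nonpos {g : ℝ → ℝ} {d t : ℝ} (ht : 0 < t) (hd : HasDerivAt g d t)
    (hg : AntitoneOn g (Ici 0)) : d ≤ 0 := by
  have h1 := (hd.hasDerivWithinAt (s := Ici 0)).derivWithin
    (uniqueDiffOn_Ici 0 t ht.le)
  rw [← h1]
  exact hg.derivWithin_nonpos

theorem aux_main
    (E : H → ℝ) (E' : H → H) (α : ℝ) (hE : Assumption1 E E' α)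
    (ζ : ℝ → ℝ) (hζ : Assumption2 E' ζ)
    (C : Set H) (hCcl : IsClosed C)
    (u₀seq : ℕ → H)
    (u₀ : H) (hconv : Tendsto u₀seq atTop (nhds u₀))
    (U U' : ℕ → ℝ → H) (hU : ∀ m, IsOGF C E' (U m) (U' m) (u₀seq m)) :
    ∃ u u' : ℝ → H, IsOGF C E' u u' u₀ ∧
      ∀ T : ℝ, 0 < T → TendstoUniformlyOn U u atTop (Icc 0 T) := by
  have hc : Continuous E' := hE.locLip.continuous
  have hEc : Continuous E := continuous_iff_continuousAt.2
    fun x => (hE.grad x).hasFDerivAt.continuousAt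
  obtain ⟨A, hA⟩ : ∃ A, ∀ m, ‖u₀seq m‖ ≤ A := by
    obtain ⟨A, hA⟩ := hconv.norm.bddAbove_range
    exact ⟨A, fun m => hA ⟨m, rfl⟩⟩
  obtain ⟨B, hB⟩ : ∃ B, ∀ m, E (u₀seq m) ≤ B := by
    obtain ⟨B, hB⟩ := ((hEc.tendsto u₀).comp hconv).bddAbove_range
    exact ⟨B, fun m => hB ⟨m, rfl⟩⟩
  have hbd : ∀ T : ℝ, ∃ R : ℝ, 0 < R ∧ ∀ m, ∀ t ∈ Icc 0 T, ‖U m t‖ ≤ R := by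
    intro T
    refine ⟨max (A + (T + (B - α)) / 2) 1, by positivity, fun m t ht => ?_⟩
    have h1 := aux_energy hE (hU m) ht.1
    have h2 : ‖U m t‖ ≤ ‖u₀seq m‖ + ‖U m t - u₀seq m‖ := norm_le_insert' _ _
    refine le_trans ?_ (le_max_left _ _)
    linarith [hA m, hB m, ht.2]
  choose R hR0 hR using hbd
  choose M' hM' using fun T => hE.gradBdd (R T) (hR0 T)
  let M : ℝ → ℝ := fun T => max (M' T) 0
  have hM0 : ∀ T, 0 ≤ M T := fun T => le_max_right _ _
  have hM : ∀ T m, ∀ t ∈ Icc 0 T, ‖E' (U m t)‖ ≤ M T := fun T m t ht =>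
    (hM' T _ (hR T m t ht)).trans (le_max_left _ _)
  have hcau : ∀ T, UniformCauchySeqOn U atTop (Icc 0 T) := by
    intro T
    rw [Metric.uniformCauchySeqOn_iff]
    intro ε hε
    have hpos := Real.exp_pos (ζ (2 * R T) * T)
    obtain ⟨N, hN⟩ := Metric.cauchySeq_iff.1 hconv.cauchySeq (ε / Real.exp (ζ (2 * R T) * T))
      (by positivity)
    refine ⟨N, fun m hm n hn t ht => ?_⟩
    have h1 := aux_gronwall hζ (hU m) (hU n) (hM T m) (hM T n) (hR T m) (hR T n) t ht
    have h2 := hN m hm n hn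
    rw [dist_eq_norm] at h2 ⊢
    rw [lt_div_iff₀ hpos] at h2
    linarith
  have hlim : ∀ t : ℝ, ∃ y, Tendsto (fun m => U m (max t 0)) atTop (nhds y) := by
    intro t
    apply cauchySeq_tendsto_of_complete
    exact (hcau (max t 0)).cauchySeq ⟨le_max_right _ _, le_rfl⟩
  choose u hu using hlim
  have hu' : ∀ t, 0 ≤ t → Tendsto (fun m => U m t) atTop (nhds (u t)) := by
    intro t ht
    have := hu t
    rwa [max_eq_left ht] at this
  have hunif : ∀ T : ℝ, TendstoUniformlyOn U u atTop (Icc 0 T) := fun T =>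
    (hcau T).tendstoUniformlyOn_of_tendsto (fun t ht => hu' t ht.1)
  have hucont0 : ∀ T : ℝ, 0 ≤ T → ContinuousOn u (Icc 0 T) := fun T hT =>
    (hunif T).continuousOn (Frequently.of_forall fun m => aux_cont (hU m) hT)
  have hucont : Continuous u := by
    have h1 : u = fun t => u (max t 0) := by
      funext t
      refine tendsto_nhds_unique (hu t) ?_
      have := hu (max t 0)
      simpa using this
    have h2 : ContinuousOn u (Ici 0) := by
      intro t ht
      have := hucont0 (t + 1) (by linarith [mem_Ici.1 ht]) t ⟨ht, by linarith⟩
      refine this.mono_of_mem_nhdsWithin ?_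
      rw [← Ici_inter_Iic]
      exact inter_mem self_mem_nhdsWithin (nhdsWithin_le_nhds (Iic_mem_nhds (by linarith)))
    rw [h1]
    exact h2.comp_continuous (by fun_prop) (fun t => mem_Ici.2 (le_max_right _ _))
  have huini : u 0 = u₀ := by
    refine tendsto_nhds_unique (hu' 0 le_rfl) ?_
    simpa [(hU _).init] using hconv
  have humem : ∀ t, 0 ≤ t → u t ∈ C := fun t ht =>
    hCcl.mem_of_tendsto (hu' t ht) (Eventually.of_forall fun m => (hU m).mem t ht)
  -- evolution variational inequality
  have hevi : ∀ p ∈ C, ∀ s t, 0 ≤ s → s ≤ t →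
      ‖p - u t‖ ^ 2 - ‖p - u s‖ ^ 2 ≤ ∫ r in s..t, 2 * ⟪E' (u r), p - u r⟫ := by
    intro p hp s t hs hst
    have ht : 0 ≤ t := hs.trans hst
    refine le_of_tendsto_of_tendsto'
      (f := fun m => ‖p - U m t‖ ^ 2 - ‖p - U m s‖ ^ 2)
      (g := fun m => ∫ r in s..t, 2 * ⟪E' (U m r), p - U m r⟫) (b := atTop) ?_ ?_
      (fun m => aux_evi (hU m) hc (hM t m) hs hst le_rfl hp)
    · exact ((tendsto_const_nhds.sub (hu' t ht)).norm.pow 2).sub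
        ((tendsto_const_nhds.sub (hu' s hs)).norm.pow 2)
    · apply intervalIntegral.tendsto_integral_filter_of_dominated_convergence
        (fun _ => 2 * (M t * (‖p‖ + R t)))
      · filter_upwards with m
        rw [uIoc_of_le hst]
        have h1 : ContinuousOn (U m) (Ioc s t) :=
          (aux_cont (hU m) ht).mono (fun x hx => ⟨hs.trans hx.1.le, hx.2⟩)
        have h2 := hc.comp_continuousOn h1
        have h3 : ContinuousOn (fun r => 2 * ⟪E' (U m r), p - U m r⟫) (Ioc s t) :=
          continuousOn_const.mul (h2.inner (continuousOn_const.sub h1))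
        exact h3.aestronglyMeasurable measurableSet_Ioc
      · filter_upwards with m
        filter_upwards with r hr
        rw [uIoc_of_le hst] at hr
        have hr' : r ∈ Icc 0 t := ⟨hs.trans hr.1.le, hr.2⟩
        rw [norm_mul, Real.norm_two]
        gcongr
        refine (norm_inner_le_norm _ _).trans ?_
        have := norm_sub_le p (U m r)
        have h4 := hR t m r hr'
        exact mul_le_mul (hM t m r hr') (by linarith) (norm_nonneg _) (hM0 t)
      · exact intervalIntegrable_const
      · filter_upwards with r hr
        rw [uIoc_of_le hst] at hr
        have h1 := hu' r (hs.trans hr.1.le)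
        exact (((hc.tendsto _).comp h1).inner (tendsto_const_nhds.sub h1)).const_mul 2
  -- weak derivative
  have hweak : ∀ T : ℝ, ∃ v : ℝ → H, MemLp v 2 (volume.restrict (Ioc 0 T)) ∧
      ∀ s t, 0 ≤ s → s ≤ t → t ≤ T → u t - u s = ∫ r in s..t, v r := by
    intro T
    refine aux_weak (hM0 T) U' (fun m => aux_aesm (hU m) T) (fun m => ?_) u ?_
    · rw [ae_restrict_iff' measurableSet_Ioc]
      filter_upwards [aux_speed (hU m)] with t h1 ht
      exact (h1 ht.1).trans (hM T m t ⟨ht.1.le, ht.2⟩)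
    · intro s t hs hst _
      simp only [← (hU _).ftc s t hs hst]
      exact (hu' t (hs.trans hst)).sub (hu' s hs)
  choose v hv2 hvi using hweak
  have hder : ∀ T : ℝ, 0 < T → ∀ᵐ t, t ∈ Ioo 0 T → HasDerivAt u (v T t) t := by
    intro T hT
    have hint : IntervalIntegrable (v T) volume 0 T := by
      rw [intervalIntegrable_iff_integrableOn_Ioc_of_le hT.le]
      exact (hv2 T).integrable (by norm_num)
    filter_upwards [hint.ae_hasDerivAt_integral] with t h1 ht
    rw [uIcc_of_le hT.le] at h1
    have h2 := (h1 ⟨ht.1.le, ht.2.le⟩ 0 ⟨le_rfl, hT.le⟩).const_add (u 0)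
    refine h2.congr_of_eventuallyEq ?_
    filter_upwards [Ioo_mem_nhds ht.1 ht.2] with r hr
    rw [← hvi T 0 r le_rfl hr.1.le hr.2.le]
    abel
  have hall : ∀ᵐ t : ℝ, 0 < t → HasDerivAt u (deriv u t) t := by
    have : ∀ᵐ t : ℝ, ∀ n : ℕ, t ∈ Ioo (0 : ℝ) (n + 1) → HasDerivAt u (v (n + 1) t) t :=
      ae_all_iff.2 fun n => hder (n + 1) (by positivity)
    filter_upwards [this] with t h1 ht
    obtain ⟨n, hn⟩ := exists_nat_gt t
    have := h1 n ⟨ht, by linarith⟩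
    exact this.differentiableAt.hasDerivAt
  have heq : ∀ T : ℝ, 0 < T → ∀ᵐ t, t ∈ Ioc 0 T → v T t = deriv u t := by
    intro T hT
    have hne : ∀ᵐ t : ℝ, t ≠ T := by simp [ae_iff, measure_singleton]
    filter_upwards [hder T hT, hne] with t h1 h2 ht
    exact (h1 ⟨ht.1, lt_of_le_of_ne ht.2 h2⟩).deriv.symm
  refine ⟨u, deriv u, ⟨huini, humem, ?_, ?_, ?_, ?_⟩, fun T _ => hunif T⟩
  · rwa [ae_restrict_iff' measurableSet_Ioi]
  · intro T hT
    have h1 : Integrable (fun t => ‖v T t‖ ^ 2) (volume.restrict (Ioc 0 T)) :=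
      (memLp_two_iff_integrable_sq_norm (hv2 T).1).1 (hv2 T)
    refine h1.congr ?_
    rw [EventuallyEq, ae_restrict_iff' measurableSet_Ioc]
    filter_upwards [heq T hT] with t h1 ht
    rw [h1 ht]
  · intro s t hs hst
    rcases eq_or_lt_of_le (hs.trans hst) with h0 | h0
    · have : s = t := by linarith
      simp [this]
    rw [hvi t s t hs hst le_rfl]
    apply intervalIntegral.integral_congr_ae
    filter_upwards [heq t h0] with r h1 hr
    rw [uIoc_of_le hst] at hr
    exact h1 ⟨hs.trans_lt hr.1, hr.2⟩
  · rw [ae_restrict_iff' measurableSet_Ioi]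
    filter_upwards [hall] with t h1 ht p hp
    have hfc : Continuous fun r => 2 * ⟪E' (u r), p - u r⟫ :=
      continuous_const.mul ((hc.comp hucont).inner (continuous_const.sub hucont))
    have hd1 : HasDerivAt (fun r => ∫ x in (0:ℝ)..r, 2 * ⟪E' (u x), p - u x⟫)
        (2 * ⟪E' (u t), p - u t⟫) t :=
      (hfc.integral_hasStrictDerivAt 0 t).hasDerivAt
    have hd2 := (((h1 ht).const_sub p).norm_sq).sub hd1
    have := aux_nonpos ht hd2 (by
      intro a ha b hb hab
      have h3 := hevi p hp a b ha hab
      rw [← intervalIntegral.integral_interval_sub_left (hfc.intervalIntegrable 0 b)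
        (hfc.intervalIntegrable 0 a)] at h3
      simp only [Pi.sub_apply]
      linarith)
    rw [inner_neg_right, real_inner_comm] at this
    linarith

/-- **Approximation of flows.** If initial data `u₀^m ∈ C` converge to `u₀ ∈ C` in `H` and each
`u₀^m` admits an Obstacle Gradient Flow, then there is an Obstacle Gradient Flow starting at
`u₀` which is the limit of the flows in `C([0,T],H)` for every `T > 0`; consequently the set of
initial data in `C` admitting an Obstacle Gradient Flow is closed. -/
theorem approximation_of_flows
    (E : H → ℝ) (E' : H → H) (α : ℝ) (hE : Assumption1 E E' α)
    (ζ : ℝ → ℝ) (hζ : Assumption2 E' ζ)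
    (C : Set H) (hCne : C.Nonempty) (hCcl : IsClosed C) (hCcv : Convex ℝ C)
    (u₀seq : ℕ → H) (hmem : ∀ m, u₀seq m ∈ C)
    (u₀ : H) (hu₀ : u₀ ∈ C) (hconv : Tendsto u₀seq atTop (nhds u₀))
    (U U' : ℕ → ℝ → H) (hU : ∀ m, IsOGF C E' (U m) (U' m) (u₀seq m)) :
    (∃ u u' : ℝ → H, IsOGF C E' u u' u₀ ∧
      ∀ T : ℝ, 0 < T → TendstoUniformlyOn U u atTop (Icc 0 T)) ∧
    IsClosed {w : H | w ∈ C ∧ ∃ u u' : ℝ → H, IsOGF C E' u u' w} := by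
  refine ⟨aux_main E E' α hE ζ hζ C hCcl u₀seq u₀ hconv U U' hU, ?_⟩
  apply IsSeqClosed.isClosed
  intro x y hx hxy
  choose hxC V V' hV using hx
  obtain ⟨u, u', hu, -⟩ := aux_main E E' α hE ζ hζ C hCcl x y hxy V V' hV
  exact ⟨hCcl.mem_of_tendsto hxy (Eventually.of_forall hxC), u, u', hu⟩
end
end

section
/- Let X = C be a closed convex subset of H endowed with the metric induced by the norm, and let (u(t))_{t≥0} be an Obstacle Gradient Flow in C. Then u is an EDE gradient flow for E on X, i.e. for every T > 0: E(u(T)) + (1/2)∫₀^T |u'|(s)² ds + (1/2)∫₀^T |∂E|(u(s))² ds = E(u(0)). -/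
open MeasureTheory Set Filter

noncomputable section

local notation "⟪" x ", " y "⟫" => @inner ℝ _ _ x y

variable {H : Type*} [NormedAddCommGroup H] [InnerProductSpace ℝ H] [CompleteSpace H]

open Topology in
/-- The metric derivative `|u'|(t) = limsup_{s → t} ‖u(s) - u(t)‖ / |s - t|` of a curve
`u : [0,∞) → H` (the limit is taken within the domain `[0,∞)`). -/
noncomputable def metricDeriv (u : ℝ → H) (t : ℝ) : ℝ :=
  Filter.limsup (fun s => ‖u s - u t‖ / |s - t|) (nhdsWithin t (Ici 0 \ {t}))

/-- The metric slope `|∂E|(w) = limsup_{v → w, v ∈ C, v ≠ w} (E(w) - E(v))⁺ / ‖w - v‖`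
of `E` at `w`, taken within the metric space `X = C`. -/
noncomputable def metricSlope (E : H → ℝ) (C : Set H) (w : H) : ℝ :=
  Filter.limsup (fun v => max (E w - E v) 0 / ‖w - v‖) (nhdsWithin w (C \ {w}))

open Topology in
lemma aux_metricDeriv (u : ℝ → H) (a : H) (t : ℝ) (ht : 0 < t) (h : HasDerivAt u a t) :
    metricDeriv u t = ‖a‖ := by
  have h1 : Tendsto (fun s => ‖u s - u t‖ / |s - t|) (𝓝[≠] t) (𝓝 ‖a‖) := by
    have := (hasDerivAt_iff_tendsto_slope.1 h).norm
    refine this.congr fun s => ?_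
    rw [slope_def_module, norm_smul, norm_inv, Real.norm_eq_abs, div_eq_inv_mul]
  have h2 : 𝓝[Ici 0 \ {t}] t = 𝓝[≠] t := by
    rw [sdiff_eq, inter_comm, nhdsWithin_inter_of_mem']
    exact mem_nhdsWithin_of_mem_nhds (Ici_mem_nhds ht)
  unfold metricDeriv
  rw [h2]
  exact h1.limsup_eq

open Topology in
lemma aux_inner (C : Set H) (u : ℝ → H) (a g : H) (t : ℝ) (ht : 0 < t) (h : HasDerivAt u a t)
    (hmem : ∀ t : ℝ, 0 ≤ t → u t ∈ C)
    (hv : ∀ v ∈ C, 0 ≤ ⟪a, v - u t⟫ + ⟪g, v - u t⟫) :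
    ⟪g, a⟫ = - ‖a‖ ^ 2 := by
  have hmin : IsLocalMin (fun s => ⟪a + g, u s⟫) t := by
    filter_upwards [Ici_mem_nhds ht] with s hs
    have := hv (u s) (hmem s hs)
    rw [← inner_add_left, inner_sub_right] at this
    linarith
  have hd : HasDerivAt (fun s => ⟪a + g, u s⟫) ⟪a + g, a⟫ t := by
    simpa using (hasDerivAt_const t (a + g)).inner ℝ h
  have := hmin.hasDerivAt_eq_zero hd
  rw [inner_add_left, real_inner_self_eq_norm_sq] at this
  linarith

open Topology in
lemma aux_chain (E : H → ℝ) (u : ℝ → H) (a g : H) (t : ℝ) (h : HasDerivAt u a t)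
    (hg : HasGradientAt E g (u t)) : HasDerivAt (fun s => E (u s)) ⟪g, a⟫ t := by
  exact hg.hasFDerivAt.comp_hasDerivAt t h

open Topology in
lemma aux_metricSlope (E : H → ℝ) (C : Set H) (u : ℝ → H) (a g : H) (t : ℝ) (ht : 0 < t)
    (h : HasDerivAt u a t) (hmem : ∀ t : ℝ, 0 ≤ t → u t ∈ C)
    (hg : HasGradientAt E g (u t))
    (hv : ∀ v ∈ C, 0 ≤ ⟪a, v - u t⟫ + ⟪g, v - u t⟫) :
    metricSlope E C (u t) = ‖a‖ := by
  have hin := aux_inner C u a g t ht h hmem hv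
  have hE := aux_chain E u a g t h hg
  rw [hin] at hE
  -- upper bound
  have hub : ∀ ε > 0, ∀ᶠ v in 𝓝[C \ {u t}] (u t),
      max (E (u t) - E v) 0 / ‖u t - v‖ ≤ ‖a‖ + ε := by
    intro ε hε
    have h1 := (hasGradientAt_iff_isLittleO.1 hg).def hε
    filter_upwards [mem_nhdsWithin_of_mem_nhds h1, self_mem_nhdsWithin] with v h1 h2
    have h3 : 0 < ‖u t - v‖ := norm_pos_iff.2 (sub_ne_zero.2 (Ne.symm h2.2))
    rw [div_le_iff₀ h3]
    have h4 := hv v h2.1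
    have h5 := real_inner_le_norm a (v - u t)
    rw [norm_sub_rev] at h3
    rw [norm_sub_rev (u t) v]
    have h6 := neg_le_of_abs_le (Real.norm_eq_abs _ ▸ h1)
    apply max_le
    · linarith
    · positivity
  have hnn : ∀ v, 0 ≤ max (E (u t) - E v) 0 / ‖u t - v‖ := fun v => by positivity
  unfold metricSlope
  by_cases hbot : (𝓝[C \ {u t}] (u t)) = ⊥
  · have ha : a = 0 := by
      by_contra ha
      have h1 : ∀ᶠ s in 𝓝[≠] t, u s ≠ u t := h.eventually_ne ha
      have h2 : Tendsto u (𝓝[≠] t) (𝓝[C \ {u t}] (u t)) := by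
        apply tendsto_nhdsWithin_of_tendsto_nhds_of_eventually_within
        · exact h.continuousAt.tendsto.mono_left nhdsWithin_le_nhds
        · filter_upwards [h1, mem_nhdsWithin_of_mem_nhds (Ici_mem_nhds ht)] with s h1 h2
          exact ⟨hmem s h2, h1⟩
      rw [hbot] at h2
      exact NeBot.ne inferInstance (le_bot_iff.1 (h2.le_comap.trans_eq comap_bot))
    rw [hbot, ha]
    simp [limsup, limsSup]
  have : (𝓝[C \ {u t}] (u t)).NeBot := ⟨hbot⟩
  have hbdd : IsBoundedUnder (· ≤ ·) (𝓝[C \ {u t}] (u t))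
      (fun v => max (E (u t) - E v) 0 / ‖u t - v‖) := ⟨‖a‖ + 1, hub 1 one_pos⟩
  have hcob : IsCoboundedUnder (· ≤ ·) (𝓝[C \ {u t}] (u t))
      (fun v => max (E (u t) - E v) 0 / ‖u t - v‖) :=
    IsBoundedUnder.isCoboundedUnder_le ⟨0, eventually_map.2 (Eventually.of_forall hnn)⟩
  apply le_antisymm
  · apply le_of_forall_pos_le_add
    intro ε hε
    exact limsup_le_of_le hcob (hub ε hε)
  · by_cases ha : a = 0
    · rw [ha, norm_zero]
      exact le_limsup_of_frequently_le (Eventually.of_forall hnn).frequently hbdd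
    apply le_of_forall_lt
    intro c hc
    obtain ⟨c', hc, hc'⟩ := exists_between hc
    refine lt_of_lt_of_le hc ?_
    have h1 : ∀ᶠ s in 𝓝[>] t, u s ≠ u t :=
      (h.eventually_ne ha).filter_mono (nhdsWithin_mono _ fun x hx => ne_of_gt hx)
    have h2 : Tendsto u (𝓝[>] t) (𝓝[C \ {u t}] (u t)) := by
      apply tendsto_nhdsWithin_of_tendsto_nhds_of_eventually_within
      · exact h.continuousAt.tendsto.mono_left nhdsWithin_le_nhds
      · filter_upwards [h1, mem_nhdsWithin_of_mem_nhds (Ici_mem_nhds ht)] with s h1 h2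
        exact ⟨hmem s h2, h1⟩
    have h3 : Tendsto (fun s => (- slope (fun s => E (u s)) t s) / ‖slope u t s‖) (𝓝[>] t)
        (𝓝 ‖a‖) := by
      have e1 := (hasDerivAt_iff_tendsto_slope.1 hE).mono_left
        (nhdsWithin_mono t (fun x (hx : x ∈ Ioi t) => ne_of_gt hx))
      have e2 := (hasDerivAt_iff_tendsto_slope.1 h).mono_left
        (nhdsWithin_mono t (fun x (hx : x ∈ Ioi t) => ne_of_gt hx))
      have := e1.neg.div e2.norm (norm_ne_zero_iff.2 ha)
      have e3 : - - ‖a‖ ^ 2 / ‖a‖ = ‖a‖ := by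
        have := norm_ne_zero_iff.2 ha
        field_simp
      rwa [e3] at this
    refine le_limsup_of_frequently_le (h2.frequently (Eventually.frequently ?_)) hbdd
    filter_upwards [h3.eventually (lt_mem_nhds hc'), self_mem_nhdsWithin] with s hs hst
    have hst' : 0 < s - t := sub_pos.2 hst
    refine hs.le.trans ?_
    have e4 : (- slope (fun s => E (u s)) t s) / ‖slope u t s‖
        = (E (u t) - E (u s)) / ‖u t - u s‖ := by
      rw [slope_def_field, slope_def_module, norm_smul, norm_inv, Real.norm_eq_abs,
        abs_of_pos hst', norm_sub_rev (u t)]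
      rw [← neg_div, neg_sub, div_div, mul_inv_cancel_left₀ hst'.ne']
    rw [e4]
    gcongr
    exact le_max_left _ _

lemma aux_ac (f G : ℝ → ℝ) (a b M : ℝ) (hG : AbsolutelyContinuousOnInterval G a b)
    (h : ∀ x ∈ uIcc a b, ∀ y ∈ uIcc a b, dist (f x) (f y) ≤ M * dist (G x) (G y)) :
    AbsolutelyContinuousOnInterval f a b := by
  unfold AbsolutelyContinuousOnInterval at *
  have h1 := hG.const_mul M
  rw [mul_zero] at h1
  refine squeeze_zero' (Eventually.of_forall fun E => Finset.sum_nonneg fun i _ => dist_nonneg)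
    ?_ h1
  filter_upwards [mem_inf_of_right (mem_principal_self _)] with E hE
  rw [Finset.mul_sum]
  exact Finset.sum_le_sum fun i hi => h _ (hE.1 i hi).1 _ (hE.1 i hi).2

lemma aux_int (C : Set H) (E' : H → H) (u u' : ℝ → H) (u₀ : H) (hu : IsOGF C E' u u' u₀)
    (T : ℝ) (hT : 0 < T) : IntervalIntegrable u' volume 0 T := by
  rw [intervalIntegrable_iff_integrableOn_Ioc_of_le hT.le]
  have hm : AEStronglyMeasurable u' (volume.restrict (Ioc 0 T)) := by
    refine (aestronglyMeasurable_deriv u (volume.restrict (Ioc 0 T))).congr ?_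
    filter_upwards [ae_restrict_of_ae_restrict_of_subset
      (Ioc_subset_Ioi_self : Ioc 0 T ⊆ Ioi (0:ℝ)) hu.derivAe] with t ht
    exact ht.deriv
  have h2 : MemLp u' 2 (volume.restrict (Ioc 0 T)) :=
    (memLp_two_iff_integrable_sq_norm hm).2 (hu.sqInt T hT)
  exact h2.integrable (by norm_num)

/-- **EDE property of the Obstacle Gradient Flow.** An Obstacle Gradient Flow in the metric
space `X = C` is an EDE gradient flow: for every `T > 0`,
`E(u(T)) + (1/2)∫₀ᵀ |u'|(s)² ds + (1/2)∫₀ᵀ |∂E|(u(s))² ds = E(u(0))`. -/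
theorem ogf_is_EDE_gradient_flow
    (E : H → ℝ) (E' : H → H) (α : ℝ) (hE : Assumption1 E E' α)
    (C : Set H) (hCne : C.Nonempty) (hCcl : IsClosed C) (hCcv : Convex ℝ C)
    (u u' : ℝ → H) (u₀ : H) (hu₀ : u₀ ∈ C) (hu : IsOGF C E' u u' u₀) :
    ∀ T : ℝ, 0 < T →
      E (u T) + (1/2) * (∫ s in (0:ℝ)..T, (metricDeriv u s) ^ 2)
        + (1/2) * (∫ s in (0:ℝ)..T, (metricSlope E C (u s)) ^ 2) = E (u 0) := by
  intro T hT
  have hint := aux_int C E' u u' u₀ hu T hT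
  have hsub : ∀ᵐ t, t ∈ Ioi (0:ℝ) → HasDerivAt u (u' t) t :=
    (ae_restrict_iff' measurableSet_Ioi).1 hu.derivAe
  have hsub2 := (ae_restrict_iff' measurableSet_Ioi).1 hu.fvi
  have e1 : ∫ s in (0:ℝ)..T, (metricDeriv u s) ^ 2 = ∫ s in (0:ℝ)..T, ‖u' s‖ ^ 2 := by
    apply intervalIntegral.integral_congr_ae
    filter_upwards [hsub] with t ht htT
    rw [uIoc_of_le hT.le] at htT
    rw [aux_metricDeriv u (u' t) t htT.1 (ht htT.1)]
  have e2 : ∫ s in (0:ℝ)..T, (metricSlope E C (u s)) ^ 2 = ∫ s in (0:ℝ)..T, ‖u' s‖ ^ 2 := by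
    apply intervalIntegral.integral_congr_ae
    filter_upwards [hsub, hsub2] with t ht ht2 htT
    rw [uIoc_of_le hT.le] at htT
    rw [aux_metricSlope E C u (u' t) (E' (u t)) t htT.1 (ht htT.1) hu.mem (hE.grad _) (ht2 htT.1)]
  -- increments of u
  have hinc : ∀ s t, 0 ≤ s → s ≤ t → t ≤ T → ‖u t - u s‖ ≤ ∫ r in s..t, ‖u' r‖ := by
    intro s t hs hst _
    rw [hu.ftc s t hs hst]
    exact intervalIntegral.norm_integral_le_integral_norm hst
  have hsubint : ∀ s t, 0 ≤ s → s ≤ t → t ≤ T →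
      IntervalIntegrable (fun r => ‖u' r‖) volume s t := by
    intro s t hs hst htT
    refine hint.norm.mono_set ?_
    rw [uIcc_of_le hst, uIcc_of_le hT.le]
    exact Icc_subset_Icc hs htT
  set G : ℝ → ℝ := fun x => ∫ r in (0:ℝ)..x, ‖u' r‖ with hGdef
  have hGac : AbsolutelyContinuousOnInterval G 0 T :=
    hint.norm.absolutelyContinuousOnInterval_intervalIntegral (by simp)
  have hGinc : ∀ s t, 0 ≤ s → s ≤ t → t ≤ T → ‖u t - u s‖ ≤ G t - G s := by
    intro s t hs hst htT
    refine (hinc s t hs hst htT).trans (le_of_eq ?_)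
    rw [hGdef]
    exact (intervalIntegral.integral_interval_sub_left
      (hsubint 0 t le_rfl (hs.trans hst) htT) (hsubint 0 s le_rfl hs (hst.trans htT))).symm
  have hGnn : ∀ t, 0 ≤ t → t ≤ T → G t ≤ G T := fun t h0 h1 => by
    have := (norm_nonneg _).trans (hGinc t T h0 h1 le_rfl)
    linarith
  have hG0 : G 0 = 0 := by simp [hGdef]
  have hbd : ∀ t, 0 ≤ t → t ≤ T → ‖u t‖ ≤ ‖u 0‖ + G T + 1 := by
    intro t h0 h1
    have a1 := hGinc 0 t le_rfl h0 h1
    have a2 := hGnn t h0 h1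
    have a3 := norm_le_norm_add_norm_sub' (u t) (u 0)
    linarith
  have hRpos : 0 < ‖u 0‖ + G T + 1 := by
    have := hGnn 0 le_rfl hT.le
    have := norm_nonneg (u 0)
    linarith
  obtain ⟨M, hM⟩ := hE.gradBdd _ hRpos
  have hM0 : 0 ≤ M := (norm_nonneg _).trans (hM 0 (by simpa using hRpos.le))
  have hlip : ∀ x ∈ Metric.closedBall (0:H) (‖u 0‖ + G T + 1),
      ∀ y ∈ Metric.closedBall (0:H) (‖u 0‖ + G T + 1), ‖E y - E x‖ ≤ M * ‖y - x‖ := by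
    intro x hx y hy
    refine (convex_closedBall (0:H) (‖u 0‖ + G T + 1)).norm_image_sub_le_of_norm_hasFDerivWithin_le
      (𝕜 := ℝ) (fun z _ => (hE.grad z).hasFDerivAt.hasFDerivWithinAt) (fun z hz => ?_) hx hy
    rw [LinearIsometryEquiv.norm_map]
    exact hM z (by simpa using hz)
  have hle : ∀ s t, 0 ≤ s → s ≤ t → t ≤ T → dist (E (u s)) (E (u t)) ≤ M * dist (G s) (G t) := by
    intro s t hs hst htT
    rw [dist_comm, dist_comm (G s), dist_eq_norm, dist_eq_norm]
    refine (hlip (u s) (by simpa using hbd s hs (hst.trans htT)) (u t)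
      (by simpa using hbd t (hs.trans hst) htT)).trans ?_
    gcongr
    exact (hGinc s t hs hst htT).trans (le_abs_self _)
  have hac : AbsolutelyContinuousOnInterval (fun s => E (u s)) 0 T := by
    refine aux_ac _ G 0 T M hGac fun x hx y hy => ?_
    rw [uIcc_of_le hT.le] at hx hy
    rcases le_total x y with hxy | hxy
    · exact hle x y hx.1 hxy hy.2
    · rw [dist_comm, dist_comm (G x)]
      exact hle y x hy.1 hxy hx.2
  have e3 : ∫ s in (0:ℝ)..T, deriv (fun s => E (u s)) s = ∫ s in (0:ℝ)..T, - ‖u' s‖ ^ 2 := by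
    apply intervalIntegral.integral_congr_ae
    filter_upwards [hsub, hsub2] with t ht ht2 htT
    rw [uIoc_of_le hT.le] at htT
    rw [(aux_chain E u (u' t) (E' (u t)) t (ht htT.1) (hE.grad _)).deriv]
    exact aux_inner C u (u' t) (E' (u t)) t htT.1 (ht htT.1) hu.mem (ht2 htT.1)
  rw [hac.integral_deriv_eq_sub, intervalIntegral.integral_neg] at e3
  rw [e1, e2]
  linarith
end
end

section
/- Let P denote the set of preconditioned initial values. Then for every u₀ in the closure of P (in H) there exists an Obstacle Gradient Flow starting at u₀. -/
open MeasureTheory Set Filter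

noncomputable section

local notation "⟪" x ", " y "⟫" => @inner ℝ _ _ x y

variable {H : Type*} [NormedAddCommGroup H] [InnerProductSpace ℝ H] [CompleteSpace H]

/-- A minimizing movement sequence with stepwidth `τ` starting at `u₀ ∈ C`. -/
def IsMinMovSeq (E : H → ℝ) (C : Set H) (τ : ℝ) (us : ℕ → H) (u₀ : H) : Prop :=
  us 0 = u₀ ∧ ∀ k : ℕ, us (k + 1) ∈ C ∧
    ∀ z ∈ C, ‖us (k + 1) - us k‖ ^ 2 / (2 * τ) + E (us (k + 1)) ≤
      ‖z - us k‖ ^ 2 / (2 * τ) + E z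

/-- The set `P` of preconditioned initial values: those `w ∈ C` admitting a family of
minimizing movement sequences whose discrete trajectories up to each time `T` are
precompact in `H`. -/
def preconditioned (E : H → ℝ) (C : Set H) : Set H :=
  {w : H | w ∈ C ∧ ∃ us : ℝ → ℕ → H,
    (∀ τ ∈ Ioo (0:ℝ) 1, IsMinMovSeq E C τ (us τ) w) ∧
    ∀ T : ℝ, 0 < T →
      IsCompact (closure {x : H | ∃ τ ∈ Ioo (0:ℝ) 1, ∃ k : ℕ, (k : ℝ) * τ ≤ T ∧ x = us τ k})}

open scoped Topology NNReal

theorem weak_lim_aux {X : Type*} [NormedAddCommGroup X] [InnerProductSpace ℝ X] [CompleteSpace X]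
    (x : ℕ → X) (K : ℝ) (hx : ∀ n, ‖x n‖ ≤ K) :
    ∃ g : X, ∀ φ : X, Tendsto (fun n => ⟪x n, φ⟫) (hyperfilter ℕ : Filter ℕ) (𝓝 ⟪g, φ⟫) := by
  let y : ℕ → WeakDual ℝ X := fun n => StrongDual.toWeakDual (InnerProductSpace.toDual ℝ X (x n))
  have hc := WeakDual.isCompact_closedBall (𝕜 := ℝ) (E := X) 0 K
  obtain ⟨z, -, hz⟩ := hc.ultrafilter_le_nhds ((hyperfilter ℕ).map y) (by
    rw [Filter.le_principal_iff]
    refine Filter.univ_mem' (f := (hyperfilter ℕ : Filter ℕ)) ?_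
    intro n
    simp [y, hx n])
  refine ⟨(InnerProductSpace.toDual ℝ X).symm (WeakDual.toStrongDual z), fun φ => ?_⟩
  rw [InnerProductSpace.toDual_symm_apply]
  have h1 := (WeakDual.eval_continuous (𝕜 := ℝ) (E := X) φ).tendsto z
  exact h1.comp hz

theorem lip_int_aux (f : ℝ → H) (K : ℝ≥0) (hf : LipschitzWith K f) (N : ℝ) :
    ∃ g : ℝ → H, IntegrableOn g (Ioc 0 N) ∧
      ∀ s t, 0 ≤ s → s ≤ t → t ≤ N → f t - f s = ∫ r in s..t, g r := by
  have hcont := hf.continuous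
  let q : ℕ → ℝ → H := fun n r => ((n:ℝ)+1) • (f (r + ((n:ℝ)+1)⁻¹) - f r)
  have hqc : ∀ n, Continuous (q n) := fun n => by fun_prop
  have hqb : ∀ n r, ‖q n r‖ ≤ K := by
    intro n r
    have hn : (0:ℝ) < (n:ℝ)+1 := by positivity
    have h := hf.dist_le_mul (r + ((n:ℝ)+1)⁻¹) r
    rw [dist_eq_norm, Real.dist_eq, add_sub_cancel_left, abs_of_pos (by positivity)] at h
    simp only [q, norm_smul, Real.norm_eq_abs, abs_of_pos hn]
    calc ((n:ℝ)+1) * _ ≤ ((n:ℝ)+1) * (K * ((n:ℝ)+1)⁻¹) := by gcongr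
      _ = K := by field_simp
  set μ : Measure ℝ := volume.restrict (Ioc 0 N) with hμ
  have hmem : ∀ n, MemLp (q n) 2 μ := fun n =>
    MemLp.of_bound (hqc n).aestronglyMeasurable K (Filter.Eventually.of_forall (hqb n))
  have hbd : ∃ B : ℝ, ∀ n, ‖(hmem n).toLp (q n)‖ ≤ B := by
    refine ⟨_, fun n => Lp.norm_le_of_ae_bound K.2 ?_⟩
    filter_upwards [(hmem n).coeFn_toLp] with r hr
    rw [hr]; exact hqb n r
  obtain ⟨B, hB⟩ := hbd
  obtain ⟨G, hG⟩ := weak_lim_aux _ B hB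
  have hGi : Integrable G μ := (Lp.memLp G).integrable (by norm_num)
  refine ⟨G, hGi, fun s t hs hst ht => ?_⟩
  have hsub : Ioc s t ⊆ Ioc 0 N := Ioc_subset_Ioc hs ht
  have hrr : μ.restrict (Ioc s t) = volume.restrict (Ioc s t) := by
    rw [hμ, Measure.restrict_restrict measurableSet_Ioc, inter_eq_left.2 hsub]
  refine ext_inner_right ℝ fun φ => ?_
  have hfin : μ (Ioc s t) ≠ ⊤ := (measure_lt_top μ _).ne
  have h1 := hG (indicatorConstLp 2 (measurableSet_Ioc (a := s) (b := t)) hfin φ)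
  have key : ∀ w : Lp H 2 μ, ⟪w, indicatorConstLp 2 (measurableSet_Ioc (a := s) (b := t)) hfin φ⟫
      = ⟪∫ r in Ioc s t, w r ∂μ, φ⟫ := by
    intro w
    rw [real_inner_comm, L2.inner_indicatorConstLp_eq_inner_setIntegral, real_inner_comm]
  simp only [key] at h1
  rw [hrr] at h1
  rw [intervalIntegral.integral_of_le hst]
  refine tendsto_nhds_unique ?_ h1
  refine Tendsto.mono_left ?_ (Nat.hyperfilter_le_atTop)
  refine Tendsto.inner ?_ tendsto_const_nhds
  have h2 : ∀ n, ∫ r in Ioc s t, (hmem n).toLp (q n) r =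
      ((n:ℝ)+1) • (∫ r in t..(t + ((n:ℝ)+1)⁻¹), f r) -
      ((n:ℝ)+1) • (∫ r in s..(s + ((n:ℝ)+1)⁻¹), f r) := by
    intro n
    have : ∫ r in Ioc s t, (hmem n).toLp (q n) r = ∫ r in Ioc s t, q n r := by
      refine integral_congr_ae ?_
      rw [← hrr]
      exact ae_restrict_of_ae (hmem n).coeFn_toLp
    rw [this, ← intervalIntegral.integral_of_le hst]
    simp only [q]
    have ii : ∀ a b, IntervalIntegrable f volume a b := fun a b => hcont.intervalIntegrable a b
    rw [intervalIntegral.integral_smul, intervalIntegral.integral_sub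
      (Continuous.intervalIntegrable (by fun_prop) _ _) (ii _ _),
      intervalIntegral.integral_comp_add_right, ← smul_sub]
    congr 1
    have e1 := intervalIntegral.integral_add_adjacent_intervals (ii s t) (ii t (t + ((n:ℝ)+1)⁻¹))
    have e2 := intervalIntegral.integral_add_adjacent_intervals (ii s (s + ((n:ℝ)+1)⁻¹))
      (ii (s + ((n:ℝ)+1)⁻¹) (t + ((n:ℝ)+1)⁻¹))
    rw [← e2] at e1
    rw [sub_eq_sub_iff_add_eq_add, add_comm, ← e1, add_comm]
  simp only [h2]
  have h3 : ∀ a : ℝ, Tendsto (fun n : ℕ => ((n:ℝ)+1) • (∫ r in a..(a + ((n:ℝ)+1)⁻¹), f r))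
      atTop (𝓝 (f a)) := by
    intro a
    have hd : HasDerivAt (fun x => ∫ r in a..x, f r) (f a) a :=
      hcont.integral_hasStrictDerivAt a a |>.hasDerivAt
    have := hd.tendsto_slope.comp (f := fun n : ℕ => a + ((n:ℝ)+1)⁻¹) (x := atTop) (by
      refine tendsto_nhdsWithin_iff.2 ⟨?_, Filter.Eventually.of_forall fun n => ?_⟩
      · simpa [one_div] using (tendsto_const_nhds (x := a)).add
          (tendsto_one_div_add_atTop_nhds_zero_nat (𝕜 := ℝ))
      · simp; positivity)
    refine this.congr fun n => ?_
    simp [slope]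
  exact (h3 t).sub (h3 s)

theorem lip_ae_aux (f : ℝ → H) (K : ℝ≥0) (hf : LipschitzWith K f) (N : ℝ) (hN : 0 < N) :
    (∀ᵐ t, t ∈ Ioo 0 N → HasDerivAt f (deriv f t) t) ∧ 
     IntegrableOn (deriv f) (Ioc 0 N) ∧
      ∀ s t, 0 ≤ s → s ≤ t → t ≤ N → f t - f s = ∫ r in s..t, deriv f r := by
  obtain ⟨g, hg, hfg⟩ := lip_int_aux f K hf N
  have h0 : ∀ᵐ t, t ∈ Ioo 0 N → HasDerivAt f (g t) t := by
    have h1 := IntervalIntegrable.ae_hasDerivAt_integral (f := g) (a := 0) (b := N)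
      ((intervalIntegrable_iff_integrableOn_Ioc_of_le hN.le).2 hg)
    filter_upwards [h1] with t ht htN
    have h2 := ht (by rw [uIcc_of_le hN.le]; exact Ioo_subset_Icc_self htN) 0 (by simp)
    refine (h2.const_add (f 0)).congr_of_eventuallyEq ?_
    filter_upwards [Ioo_mem_nhds htN.1 htN.2] with r hr
    rw [← hfg 0 r le_rfl hr.1.le hr.2.le]; abel
  have h1 : ∀ᵐ t, t ∈ Ioc 0 N → deriv f t = g t := by
    have h₂ : ∀ᵐ x : ℝ, x ≠ N := by simp [ae_iff, measure_singleton]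
    filter_upwards [h0, h₂] with t ht h2 h3
    exact (ht ⟨h3.1, lt_of_le_of_ne h3.2 h2⟩).deriv
  refine ⟨?_, ?_, ?_⟩
  · filter_upwards [h0] with t ht h
    exact (ht h).differentiableAt.hasDerivAt
  · exact hg.congr_fun_ae (((ae_restrict_iff' measurableSet_Ioc).2 h1).mono fun _ h => h.symm)
  · intro s t hs hst ht
    rw [hfg s t hs hst ht]
    refine intervalIntegral.integral_congr_ae ?_
    filter_upwards [h1] with r hr h
    rw [uIoc_of_le hst] at h
    exact (hr ⟨hs.trans_lt h.1, h.2.trans ht⟩).symm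

theorem euler_lagrange_aux (E : H → ℝ) (E' : H → H) (hg : ∀ u : H, HasGradientAt E (E' u) u)
    (C : Set H) (hC : Convex ℝ C) (τ : ℝ) (hτ : 0 < τ) (a x : H) (hx : x ∈ C)
    (hmin : ∀ z ∈ C, ‖x - a‖ ^ 2 / (2 * τ) + E x ≤ ‖z - a‖ ^ 2 / (2 * τ) + E z)
    (v : H) (hv : v ∈ C) :
    0 ≤ ⟪x - a, v - x⟫ + τ * ⟪E' x, v - x⟫ := by
  let ψ : ℝ → ℝ := fun s => ‖(x + s • (v - x)) - a‖ ^ 2 / (2 * τ) + E (x + s • (v - x))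
  have hline : HasDerivAt (fun s : ℝ => x + s • (v - x)) (v - x) 0 := by
    simpa using ((hasDerivAt_id (0:ℝ)).smul_const (v - x)).const_add x
  have hd1 : HasDerivAt (fun s : ℝ => ‖(x + s • (v - x)) - a‖ ^ 2) (2 * ⟪x - a, v - x⟫) 0 := by
    simpa using (hline.sub_const a).norm_sq
  have hd2 : HasDerivAt (fun s : ℝ => E (x + s • (v - x))) ⟪E' x, v - x⟫ 0 := by
    have h := (hg x).hasFDerivAt
    have h' : HasFDerivAt E (InnerProductSpace.toDual ℝ H (E' x)) (x + (0:ℝ) • (v - x)) := by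
      simpa using h
    exact h'.comp_hasDerivAt (0:ℝ) hline
  have hd : HasDerivAt ψ (2 * ⟪x - a, v - x⟫ / (2 * τ) + ⟪E' x, v - x⟫) 0 :=
    (hd1.div_const _).add hd2
  have hsl := hd.tendsto_slope.mono_left
    (nhdsWithin_mono 0 (fun s (hs : s ∈ Ioi (0:ℝ)) => (ne_of_gt hs : s ≠ 0)))
  have hnn : 0 ≤ 2 * ⟪x - a, v - x⟫ / (2 * τ) + ⟪E' x, v - x⟫ := by
    refine ge_of_tendsto hsl ?_
    filter_upwards [Ioo_mem_nhdsGT (zero_lt_one (α := ℝ))] with s hs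
    have hmem : x + s • (v - x) ∈ C := hC.add_smul_sub_mem hx hv ⟨hs.1.le, hs.2.le⟩
    have := hmin _ hmem
    have h0 : ψ 0 ≤ ψ s := by simpa [ψ] using this
    rw [slope_def_field]
    exact div_nonneg (by linarith) (by linarith [hs.1])
  have h2 : ⟪x - a, v - x⟫ + τ * ⟪E' x, v - x⟫ =
      τ * (2 * ⟪x - a, v - x⟫ / (2 * τ) + ⟪E' x, v - x⟫) := by field_simp
  rw [h2]; positivity

theorem steps_aux (b : ℕ → H) (c : ℝ) (k : ℕ) (p : ℕ)
    (h : ∀ i, i < p → ‖b (k + i + 1) - b (k + i)‖ ≤ c) : ‖b (k + p) - b k‖ ≤ p * c := by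
  induction p with
  | zero => simp
  | succ p ih =>
    have h1 := ih (fun i hi => h i (by omega))
    have h2 := h p (by omega)
    have h3 := norm_add_le (b (k + p + 1) - b (k + p)) (b (k + p) - b k)
    rw [sub_add_sub_cancel] at h3
    push_cast
    rw [← add_assoc]
    linarith

theorem block_aux (E' : H → H) (b : ℕ → H) (σ M L D : ℝ) (hσ : 0 < σ) (hM : 0 ≤ M) (hL : 0 ≤ L)
    (hD : 0 ≤ D) (v : H) (k p : ℕ)
    (hVI : ∀ i, i < p → 0 ≤ ⟪b (k + i + 1) - b (k + i), v - b (k + i + 1)⟫ +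
      σ * ⟪E' (b (k + i + 1)), v - b (k + i + 1)⟫)
    (hs : ∀ i, i < p → ‖b (k + i + 1) - b (k + i)‖ ≤ M * σ)
    (hE : ‖E' (b (k + p))‖ ≤ M)
    (hLip : ∀ i, i < p → ‖E' (b (k + i + 1)) - E' (b (k + p))‖ ≤ L * ‖b (k + i + 1) - b (k + p)‖)
    (hv : ∀ i, i < p → ‖v - b (k + i + 1)‖ ≤ D) :
    -((2 * M ^ 2 + L * M * D) * (p * σ) ^ 2) ≤
      ⟪b (k + p) - b k, v - b (k + p)⟫ + p * σ * ⟪E' (b (k + p)), v - b (k + p)⟫ := by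
  set B := b (k + p) with hB
  have hd : ∀ i, i < p → ‖b (k + i + 1) - B‖ ≤ M * (p * σ) := by
    intro i hi
    have h := steps_aux b (M * σ) (k + i + 1) (p - (i + 1)) (fun j hj => by
      have := hs (i + 1 + j) (by omega)
      simpa only [add_assoc] using this)
    rw [show k + i + 1 + (p - (i + 1)) = k + p by omega, ← hB, norm_sub_rev] at h
    refine h.trans ?_
    have : ((p - (i + 1) : ℕ) : ℝ) ≤ p := by exact_mod_cast Nat.sub_le _ _
    calc ((p - (i + 1) : ℕ) : ℝ) * (M * σ) ≤ p * (M * σ) := by gcongr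
      _ = _ := by ring
  have hstep : ∀ i, i < p → -((2 * M ^ 2 + L * M * D) * σ * (p * σ)) ≤
      ⟪b (k + i + 1) - b (k + i), v - B⟫ + σ * ⟪E' B, v - B⟫ := by
    intro i hi
    have h1 := hVI i hi
    set x := b (k + i + 1)
    set y := b (k + i)
    have e1 : ⟪x - y, v - x⟫ = ⟪x - y, v - B⟫ - ⟪x - y, x - B⟫ := by
      rw [← inner_sub_right]; congr 1; abel
    have e2 : ⟪E' x, v - x⟫ = ⟪E' B, v - B⟫ + ⟪E' x - E' B, v - x⟫ - ⟪E' B, x - B⟫ := by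
      simp only [inner_sub_left, inner_sub_right]
      ring
    have b1 : |⟪x - y, x - B⟫| ≤ (M * σ) * (M * (p * σ)) :=
      (abs_real_inner_le_norm _ _).trans (by gcongr; exacts [hs i hi, hd i hi])
    have b2 : |⟪E' x - E' B, v - x⟫| ≤ (L * (M * (p * σ))) * D := by
      refine (abs_real_inner_le_norm _ _).trans ?_
      gcongr
      · exact (hLip i hi).trans (by gcongr; exact hd i hi)
      · exact hv i hi
    have b3 : |⟪E' B, x - B⟫| ≤ M * (M * (p * σ)) :=
      (abs_real_inner_le_norm _ _).trans (by gcongr; exact hd i hi)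
    have b2' := mul_le_mul_of_nonneg_left (le_of_abs_le b2) hσ.le
    have b3' := mul_le_mul_of_nonneg_left (neg_le_of_abs_le b3) hσ.le
    have b1' := neg_le_of_abs_le b1
    rw [e1, e2] at h1
    nlinarith
  have hsum : ∀ q, q ≤ p → -((2 * M ^ 2 + L * M * D) * σ * (p * σ)) * q ≤
      ⟪b (k + q) - b k, v - B⟫ + q * (σ * ⟪E' B, v - B⟫) := by
    intro q
    induction q with
    | zero => simp
    | succ q ih =>
      intro hq
      have h1 := ih (by omega)
      have h2 := hstep q (by omega)
      have e : ⟪b (k + (q + 1)) - b k, v - B⟫ = ⟪b (k + q + 1) - b (k + q), v - B⟫ +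
          ⟪b (k + q) - b k, v - B⟫ := by
        rw [← inner_add_left, sub_add_sub_cancel, add_assoc]
      rw [e]; push_cast; linarith
  have := hsum p le_rfl
  rw [← hB] at this
  linarith

theorem gronwall_aux (x : ℕ → ℝ) (L K τ : ℝ) (hL : 0 ≤ L) (hK : 0 ≤ K) (hτ : 0 < τ)
    (hsm : 4 * L * τ ≤ 1) (J : ℕ) (hx0 : ∀ j, 0 ≤ x j)
    (hx : ∀ j, j < J → (1 - 2 * L * τ) * x (j + 1) ≤ x j + 2 * K * τ ^ 2) :
    x J ≤ Real.exp (4 * L * (J * τ)) * (x 0 + 2 * K * τ * (J * τ)) := by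
  have key : ∀ j, j ≤ J → x j ≤ Real.exp (4 * L * (j * τ)) * (x 0 + 2 * K * τ * (j * τ)) := by
    intro j
    induction j with
    | zero => simp
    | succ j ih =>
      intro hj
      have h1 := ih (by omega)
      have h2 := hx j (by omega)
      set A := x j + 2 * K * τ ^ 2 with hA
      have hA0 : 0 ≤ A := by have := hx0 j; positivity
      have hLt : 0 ≤ L * τ := by positivity
      have h3 : x (j + 1) ≤ (1 + 4 * L * τ) * A := by
        have h4 : (1 + 4 * L * τ) * ((1 - 2 * L * τ) * x (j + 1)) ≤ (1 + 4 * L * τ) * A := by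
          gcongr
        have h5 : 0 ≤ (L * τ) * (1 - 4 * L * τ) * x (j + 1) := by
          have := hx0 (j + 1)
          have : 0 ≤ 1 - 4 * L * τ := by linarith
          positivity
        nlinarith
      have h6 : 1 + 4 * L * τ ≤ Real.exp (4 * L * τ) := by
        have := Real.add_one_le_exp (4 * L * τ); linarith
      have h7 : 1 ≤ Real.exp (4 * L * (j * τ)) := Real.one_le_exp (by positivity)
      have h8 : A ≤ Real.exp (4 * L * (j * τ)) * (x 0 + 2 * K * τ * ((j + 1) * τ)) := by
        have : 2 * K * τ ^ 2 ≤ Real.exp (4 * L * (j * τ)) * (2 * K * τ ^ 2) :=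
          le_mul_of_one_le_left (by positivity) h7
        rw [hA]
        nlinarith
      calc x (j + 1) ≤ (1 + 4 * L * τ) * A := h3
        _ ≤ Real.exp (4 * L * τ) * (Real.exp (4 * L * (j * τ)) * (x 0 + 2 * K * τ * ((j + 1) * τ))) := by
          gcongr
        _ = _ := by
          rw [← mul_assoc, ← Real.exp_add]; push_cast; ring_nf
  exact key J le_rfl

theorem tau_floor_aux (τ t T : ℝ) (hτ : 0 < τ) (ht : t ≤ T) (hT : 0 ≤ T) :
    (⌊t / τ⌋₊ : ℝ) * τ ≤ T := by
  rcases le_total t 0 with h | h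
  · rw [Nat.floor_of_nonpos (div_nonpos_of_nonpos_of_nonneg h hτ.le)]; simpa using hT
  · have := Nat.floor_le (div_nonneg h hτ.le)
    rw [le_div_iff₀ hτ] at this
    exact this.trans ht

theorem cauchy_aux (E' : H → H) (C : Set H) (a b : ℕ → H) (σ τ M L R T : ℝ) (N : ℕ)
    (hσ : 0 < σ) (hτ : 0 < τ) (hN : (N:ℝ) * σ = τ)
    (hM : 0 ≤ M) (hL : 0 ≤ L) (hR : 0 ≤ R)
    (haC : ∀ k, a k ∈ C) (hbC : ∀ k, b k ∈ C)
    (haVI : ∀ k, ∀ v ∈ C, 0 ≤ ⟪a (k + 1) - a k, v - a (k + 1)⟫ + τ * ⟪E' (a (k + 1)), v - a (k + 1)⟫)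
    (hbVI : ∀ k, ∀ v ∈ C, 0 ≤ ⟪b (k + 1) - b k, v - b (k + 1)⟫ + σ * ⟪E' (b (k + 1)), v - b (k + 1)⟫)
    (haR : ∀ k : ℕ, (k:ℝ) * τ ≤ T → ‖a k‖ ≤ R)
    (hbR : ∀ k : ℕ, (k:ℝ) * σ ≤ T → ‖b k‖ ≤ R)
    (hEM : ∀ x, ‖x‖ ≤ R → ‖E' x‖ ≤ M)
    (hEL : ∀ x y, ‖x‖ ≤ R → ‖y‖ ≤ R → ‖E' x - E' y‖ ≤ L * ‖x - y‖)
    (hbs : ∀ k : ℕ, ((k + 1 : ℕ):ℝ) * σ ≤ T → ‖b (k + 1) - b k‖ ≤ M * σ)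
    (J : ℕ) (hJ : (J:ℝ) * τ ≤ T) :
    ‖a J - b (J * N)‖ ^ 2 ≤ Real.exp (4 * L * T) * 
      (‖a 0 - b 0‖ ^ 2 + (2 * (2 * M ^ 2 + L * M * (2 * R)) * T) * τ) + 16 * R ^ 2 * L * τ := by
  set K := 2 * M ^ 2 + L * M * (2 * R) with hK
  have hK0 : 0 ≤ K := by positivity
  have hT : 0 ≤ T := le_trans (by positivity) hJ
  have hbT : ∀ j k : ℕ, j ≤ J → k ≤ j * N → (k:ℝ) * σ ≤ T := by
    intro j k hj hk
    have h1 : (k:ℝ) ≤ J * N := by exact_mod_cast hk.trans (Nat.mul_le_mul_right _ hj)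
    calc (k:ℝ) * σ ≤ J * N * σ := by gcongr
      _ = J * τ := by rw [mul_assoc, hN]
      _ ≤ T := hJ
  have haT : ∀ j : ℕ, j ≤ J → (j:ℝ) * τ ≤ T := by
    intro j hj
    have h1 : (j:ℝ) ≤ J := by exact_mod_cast hj
    exact le_trans (by gcongr) hJ
  have hpos : 0 ≤ Real.exp (4 * L * T) * (‖a 0 - b 0‖ ^ 2 + (2 * K * T) * τ) := by positivity
  by_cases hsm : 4 * L * τ ≤ 1
  · have hg := gronwall_aux (fun j => ‖a j - b (j * N)‖ ^ 2) L K τ hL hK0 hτ hsm J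
      (fun j => by positivity) (by
        intro j hj
        have hja := haT (j + 1) hj
        have hRa : ‖a (j + 1)‖ ≤ R := haR _ hja
        have hRb : ‖b ((j + 1) * N)‖ ≤ R := hbR _ (hbT (j + 1) _ hj le_rfl)
        have h1 := haVI j _ (hbC ((j + 1) * N))
        have h2 := block_aux E' b σ M L (2 * R) hσ hM hL (by positivity) (a (j + 1)) (j * N) N
          (fun i _ => hbVI _ _ (haC _))
          (fun i hi => hbs _ (hbT (j + 1) _ hj (by rw [add_mul]; omega)))
          (hEM _ (by rw [← Nat.succ_mul]; exact hRb))
          (fun i hi => hEL _ _ (hbR _ (hbT (j + 1) _ hj (by rw [add_mul]; omega)))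
            (by rw [← Nat.succ_mul]; exact hRb))
          (fun i hi => (norm_sub_le _ _).trans (by
            have := hbR (j * N + i + 1) (hbT (j + 1) _ hj (by rw [add_mul]; omega))
            linarith))
        rw [show j * N + N = (j + 1) * N by ring, hN, ← hK] at h2
        have hl := hEL _ _ hRa hRb
        set x := a (j + 1)
        set y := b ((j + 1) * N)
        set x' := a j
        set y' := b (j * N)
        have h3 : |⟪E' x - E' y, x - y⟫| ≤ L * ‖x - y‖ * ‖x - y‖ :=
          (abs_real_inner_le_norm _ _).trans (by gcongr)
        have h4 := mul_le_mul_of_nonneg_left (neg_le_of_abs_le h3) hτ.le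
        have h5 : 2 * ⟪(x - y) - (x' - y'), x - y⟫ ≥ ‖x - y‖ ^ 2 - ‖x' - y'‖ ^ 2 := by
          have e1 := norm_sub_sq_real (x - y) (x' - y')
          have e2 := sq_nonneg ‖(x - y) - (x' - y')‖
          rw [inner_sub_left, real_inner_self_eq_norm_sq, real_inner_comm]
          linarith
        have e3 : ⟪x - x', y - x⟫ + ⟪y - y', x - y⟫ = -⟪(x - y) - (x' - y'), x - y⟫ := by
          simp only [inner_sub_left, inner_sub_right]; ring
        have e4 : ⟪E' x, y - x⟫ + ⟪E' y, x - y⟫ = -⟪E' x - E' y, x - y⟫ := by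
          simp only [inner_sub_left, inner_sub_right]; ring
        have e5 : τ * ⟪E' x, y - x⟫ + τ * ⟪E' y, x - y⟫ = -(τ * ⟪E' x - E' y, x - y⟫) := by
          rw [← mul_add, e4]; ring
        nlinarith)
    simp only [zero_mul] at hg
    refine hg.trans ?_
    have h6 : Real.exp (4 * L * (J * τ)) * (‖a 0 - b 0‖ ^ 2 + 2 * K * τ * (J * τ)) ≤
        Real.exp (4 * L * T) * (‖a 0 - b 0‖ ^ 2 + 2 * K * τ * T) := by gcongr
    have h7 : 0 ≤ 16 * R ^ 2 * L * τ := by positivity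
    have h8 : 2 * K * τ * T = 2 * K * T * τ := by ring
    rw [h8] at h6
    linarith
  · push Not at hsm
    have hRa : ‖a J‖ ≤ R := haR _ hJ
    have hRb : ‖b (J * N)‖ ≤ R := hbR _ (hbT J _ le_rfl le_rfl)
    have h1 : ‖a J - b (J * N)‖ ≤ 2 * R := (norm_sub_le _ _).trans (by linarith)
    have h2 : ‖a J - b (J * N)‖ ^ 2 ≤ (2 * R) ^ 2 := by gcongr
    have h3 : 0 ≤ R ^ 2 * (4 * L * τ - 1) := mul_nonneg (by positivity) (by linarith)
    nlinarith

theorem core_aux (E' : H → H) (hEc : Continuous E') (C : Set H) (hCcl : IsClosed C) (u₀ : H)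
    (τ : ℕ → ℝ) (hτd : ∀ n, τ n = (1 / 2) ^ (n + 1)) (b : ℕ → ℕ → H) (hC : ∀ n k, b n k ∈ C)
    (hVI : ∀ n k, ∀ v ∈ C, 0 ≤ ⟪b n (k + 1) - b n k, v - b n (k + 1)⟫ +
      τ n * ⟪E' (b n (k + 1)), v - b n (k + 1)⟫)
    (h0 : ∀ n, ‖b n 0 - u₀‖ ≤ τ n)
    (hloc : ∀ T : ℝ, 0 < T → ∃ R M L : ℝ, 0 ≤ R ∧ 0 ≤ M ∧ 0 ≤ L ∧
      (∀ n k : ℕ, (k:ℝ) * τ n ≤ T → ‖b n k‖ ≤ R) ∧ (∀ x, ‖x‖ ≤ R → ‖E' x‖ ≤ M) ∧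
      (∀ x y, ‖x‖ ≤ R → ‖y‖ ≤ R → ‖E' x - E' y‖ ≤ L * ‖x - y‖)) :
    ∃ u : ℝ → H, u 0 = u₀ ∧ (∀ t, u t ∈ C) ∧
      (∀ T : ℝ, 0 < T → ∃ K : ℝ≥0, ∀ s t, s ≤ t → t ≤ T → ‖u t - u s‖ ≤ K * (t - s)) ∧
      (∀ T : ℝ, 0 < T → ∀ v ∈ C, ∃ K : ℝ, ∀ s t, 0 ≤ s → s ≤ t → t ≤ T →
        -(K * (t - s) ^ 2) ≤ ⟪u t - u s, v - u t⟫ + (t - s) * ⟪E' (u t), v - u t⟫) := by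
  have hτ0 : ∀ n, 0 < τ n := fun n => by rw [hτd]; positivity
  have hτ1 : ∀ n, τ n ≤ 1 := fun n => by rw [hτd]; exact pow_le_one₀ (by norm_num) (by norm_num)
  have hτl : Tendsto τ atTop (𝓝 0) := by
    have := (tendsto_pow_atTop_nhds_zero_of_lt_one (r := (1/2:ℝ)) (by norm_num) (by norm_num)).comp
      (tendsto_add_atTop_nat 1)
    exact this.congr fun n => (hτd n).symm
  have hstep : ∀ (T R M : ℝ), (∀ n k : ℕ, (k:ℝ) * τ n ≤ T → ‖b n k‖ ≤ R) →
      (∀ x, ‖x‖ ≤ R → ‖E' x‖ ≤ M) →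
      ∀ n k : ℕ, ((k + 1 : ℕ):ℝ) * τ n ≤ T → ‖b n (k + 1) - b n k‖ ≤ M * τ n := by
    intro T R M hR hM n k hk
    have h1 := hVI n k _ (hC n k)
    have h2 := hM _ (hR n _ hk)
    set x := b n (k + 1)
    set y := b n k
    rw [show y - x = -(x - y) by abel, inner_neg_right, inner_neg_right,
      real_inner_self_eq_norm_sq] at h1
    have h3 := neg_le_of_abs_le ((abs_real_inner_le_norm (E' x) (x - y)).trans
      (mul_le_mul_of_nonneg_right h2 (norm_nonneg _)))
    have h4 := mul_le_mul_of_nonneg_left h3 (hτ0 n).le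
    have h5 : ‖x - y‖ * ‖x - y‖ ≤ (M * τ n) * ‖x - y‖ := by nlinarith
    have hM0 : 0 ≤ M := (norm_nonneg _).trans h2
    rcases (norm_nonneg (x - y)).eq_or_lt with h | h
    · rw [← h]; have := hτ0 n; positivity
    · exact le_of_mul_le_mul_right h5 h
  let U : ℕ → ℝ → H := fun n t => b n ⌊t / τ n⌋₊
  have hdiff : ∀ (T R M : ℝ), 0 < T → 0 ≤ M → (∀ n k : ℕ, (k:ℝ) * τ n ≤ T → ‖b n k‖ ≤ R) →
      (∀ x, ‖x‖ ≤ R → ‖E' x‖ ≤ M) → ∀ n, ∀ j k : ℕ, j ≤ k → (k:ℝ) * τ n ≤ T →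
      ‖b n k - b n j‖ ≤ M * (((k - j : ℕ) : ℝ) * τ n) := by
    intro T R M hT hM0 hR hM n j k hjk hk
    have h := steps_aux (b n) (M * τ n) j (k - j) (fun i hi => hstep T R M hR hM n _ (by
      have : ((j + i + 1 : ℕ) : ℝ) ≤ k := by exact_mod_cast (by omega)
      exact le_trans (mul_le_mul_of_nonneg_right this (hτ0 n).le) hk))
    rw [Nat.add_sub_cancel' hjk] at h
    linarith
  have hcau : ∀ t, CauchySeq (fun n => U n t) := by
    intro t
    set T := max t 0 + 1 with hT
    have hT0 : 0 < T := by positivity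
    have htT : t ≤ T := by have := le_max_left t 0; linarith
    obtain ⟨R, M, L, hR0, hM0, hL0, hR, hM, hL⟩ := hloc T hT0
    set A := Real.exp (4 * L * T) * (4 + 2 * (2 * M ^ 2 + L * M * (2 * R)) * T) +
      16 * R ^ 2 * L with hA
    have hA0 : 0 ≤ A := by positivity
    refine cauchySeq_of_le_tendsto_0' (fun n => Real.sqrt (A * τ n) + M * τ n) ?_ ?_
    · intro n m hnm
      set N : ℕ := 2 ^ (m - n) with hN
      have hN0 : 0 < N := by positivity
      have hNτ : (N:ℝ) * τ m = τ n := by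
        rw [hτd, hτd, hN, show m + 1 = (m - n) + (n + 1) by omega, pow_add _ (m - n)]
        push_cast
        rw [← mul_assoc, ← mul_pow]
        norm_num
      set J := ⌊t / τ n⌋₊ with hJ
      have hfl : J = ⌊t / τ m⌋₊ / N := by
        rw [← Nat.floor_div_natCast, hJ, div_div, mul_comm (τ m), hNτ]
      have hJT : (J:ℝ) * τ n ≤ T := tau_floor_aux _ _ _ (hτ0 n) htT hT0.le
      have h1 := cauchy_aux E' C (b n) (b m) (τ m) (τ n) M L R T N (hτ0 m) (hτ0 n) hNτ hM0 hL0 hR0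
        (hC n) (hC m) (hVI n) (hVI m) (hR n) (hR m) hM hL (hstep T R M hR hM m) J hJT
      have h2 : ‖b n 0 - b m 0‖ ≤ 2 * τ n := by
        have e := norm_sub_le (b n 0 - u₀) (b m 0 - u₀)
        rw [sub_sub_sub_cancel_right] at e
        have e1 := h0 n
        have e2 := h0 m
        have e3 : τ m ≤ τ n := by
          rw [hτd, hτd]; exact pow_le_pow_of_le_one (by norm_num) (by norm_num) (by omega)
        linarith
      have h3 : ‖b n 0 - b m 0‖ ^ 2 ≤ 4 * τ n := by
        have : ‖b n 0 - b m 0‖ ^ 2 ≤ (2 * τ n) ^ 2 := by gcongr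
        nlinarith [hτ0 n, hτ1 n]
      have h4 : ‖b n J - b m (J * N)‖ ^ 2 ≤ A * τ n := by
        refine h1.trans ?_
        have : Real.exp (4 * L * T) * (‖b n 0 - b m 0‖ ^ 2 +
            (2 * (2 * M ^ 2 + L * M * (2 * R)) * T) * τ n) ≤ Real.exp (4 * L * T) *
            (4 * τ n + (2 * (2 * M ^ 2 + L * M * (2 * R)) * T) * τ n) := by gcongr
        rw [hA]
        linarith
      have h5 : ‖b n J - b m (J * N)‖ ≤ Real.sqrt (A * τ n) := Real.le_sqrt_of_sq_le h4
      have h6 : J * N ≤ ⌊t / τ m⌋₊ := by rw [hfl]; exact Nat.div_mul_le_self _ _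
      have h7 := hdiff T R M hT0 hM0 hR hM m (J * N) ⌊t / τ m⌋₊ h6
        (tau_floor_aux _ _ _ (hτ0 m) htT hT0.le)
      have h8 : ((⌊t / τ m⌋₊ - J * N : ℕ) : ℝ) * τ m ≤ τ n := by
        have : ⌊t / τ m⌋₊ - J * N ≤ N := by
          rw [hfl]
          have := Nat.lt_div_mul_add (a := ⌊t / τ m⌋₊) hN0
          omega
        have : ((⌊t / τ m⌋₊ - J * N : ℕ) : ℝ) ≤ N := by exact_mod_cast this
        calc _ ≤ (N:ℝ) * τ m := mul_le_mul_of_nonneg_right this (hτ0 m).le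
          _ = _ := hNτ
      have h9 := mul_le_mul_of_nonneg_left h8 hM0
      rw [dist_eq_norm]
      have h10 := norm_sub_le (b n J - b m (J * N)) (b m ⌊t / τ m⌋₊ - b m (J * N))
      rw [sub_sub_sub_cancel_right] at h10
      show ‖b n J - b m ⌊t / τ m⌋₊‖ ≤ _
      linarith
    · have h1 : Tendsto (fun n => Real.sqrt (A * τ n)) atTop (𝓝 (Real.sqrt (A * 0))) :=
        (Real.continuous_sqrt.tendsto _).comp (hτl.const_mul A)
      have h2 := h1.add (hτl.const_mul M)
      simpa using h2
  choose u hu using fun t => cauchySeq_tendsto_of_complete (hcau t)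
  have hfloor : ∀ t, 0 ≤ t → Tendsto (fun n => (⌊t / τ n⌋₊ : ℝ) * τ n) atTop (𝓝 t) := by
    intro t ht
    refine tendsto_of_tendsto_of_tendsto_of_le_of_le (g := fun n => t - τ n) (h := fun _ => t)
      (by simpa using hτl.const_sub t) tendsto_const_nhds (fun n => ?_)
      (fun n => tau_floor_aux _ _ _ (hτ0 n) le_rfl ht)
    have := Nat.lt_floor_add_one (t / τ n)
    rw [div_lt_iff₀ (hτ0 n)] at this
    simp only
    linarith
  have hmono : ∀ n s t, s ≤ t → ⌊s / τ n⌋₊ ≤ ⌊t / τ n⌋₊ := fun n s t hst =>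
    Nat.floor_le_floor (div_le_div_of_nonneg_right hst (hτ0 n).le)
  have hneg : ∀ n s, U n s = U n (max s 0) := by
    intro n s
    rcases le_total s 0 with h | h
    · simp only [U, max_eq_right h]
      rw [Nat.floor_of_nonpos (div_nonpos_of_nonpos_of_nonneg h (hτ0 n).le)]; simp
    · rw [max_eq_left h]
  have hneg' : ∀ s, u s = u (max s 0) := fun s =>
    tendsto_nhds_unique (hu s) ((hu (max s 0)).congr fun n => (hneg n s).symm)
  refine ⟨u, ?_, fun t => hCcl.mem_of_tendsto (hu t) (Filter.Eventually.of_forall fun n => hC _ _),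
    ?_, ?_⟩
  · refine tendsto_nhds_unique (hu 0) ?_
    rw [tendsto_iff_norm_sub_tendsto_zero]
    refine squeeze_zero (fun _ => norm_nonneg _) (fun n => ?_) hτl
    simpa [U] using h0 n
  · intro T hT0
    obtain ⟨R, M, L, hR0, hM0, hL0, hR, hM, hL⟩ := hloc T hT0
    have key : ∀ s t, 0 ≤ s → s ≤ t → t ≤ T → ‖u t - u s‖ ≤ M * (t - s) := by
      intro s t hs hst ht
      refine le_of_tendsto_of_tendsto ((hu t).sub (hu s)).norm
        (((hfloor t (hs.trans hst)).sub (hfloor s hs)).const_mul M)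
        (Filter.Eventually.of_forall fun n => ?_)
      have := hdiff T R M hT0 hM0 hR hM n _ _ (hmono n s t hst)
        (tau_floor_aux _ _ _ (hτ0 n) ht hT0.le)
      rw [Nat.cast_sub (hmono n s t hst), sub_mul] at this
      exact this
    refine ⟨⟨M, hM0⟩, fun s t hst ht => ?_⟩
    rw [hneg' s, hneg' t]
    refine (key _ _ (le_max_right _ _) (max_le_max_right 0 hst) (max_le ht hT0.le)).trans ?_
    refine mul_le_mul_of_nonneg_left ?_ hM0
    rcases le_total s 0 with h | h <;> rcases le_total t 0 with h' | h' <;>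
      simp [h, h'] <;> linarith
  · intro T hT0 v hv
    obtain ⟨R, M, L, hR0, hM0, hL0, hR, hM, hL⟩ := hloc T hT0
    refine ⟨2 * M ^ 2 + L * M * (‖v‖ + R), fun s t hs hst ht => ?_⟩
    have hd := (hfloor t (hs.trans hst)).sub (hfloor s hs)
    have hv' : Tendsto (fun n => v - U n t) atTop (𝓝 (v - u t)) := (hu t).const_sub v
    refine le_of_tendsto_of_tendsto ((hd.pow 2).const_mul _).neg
      ((((hu t).sub (hu s)).inner hv').add
        (hd.mul (((hEc.tendsto _).comp (hu t)).inner hv')))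
      (Filter.Eventually.of_forall fun n => ?_)
    have hm := hmono n s t hst
    set j := ⌊s / τ n⌋₊ with hj
    set k := ⌊t / τ n⌋₊ with hk
    have hkT : (k:ℝ) * τ n ≤ T := tau_floor_aux _ _ _ (hτ0 n) ht hT0.le
    have hT' : ∀ i : ℕ, i ≤ k → (i:ℝ) * τ n ≤ T := fun i hi => by
      have : (i:ℝ) ≤ k := by exact_mod_cast hi
      exact le_trans (mul_le_mul_of_nonneg_right this (hτ0 n).le) hkT
    have e : j + (k - j) = k := Nat.add_sub_cancel' hm
    have := block_aux E' (b n) (τ n) M L (‖v‖ + R) (hτ0 n) hM0 hL0 (by positivity) v j (k - j)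
      (fun i _ => hVI _ _ _ hv) (fun i hi => hstep T R M hR hM n _ (hT' _ (by omega)))
      (by rw [e]; exact hM _ (hR _ _ hkT))
      (fun i hi => by rw [e]; exact hL _ _ (hR _ _ (hT' _ (by omega))) (hR _ _ hkT))
      (fun i hi => (norm_sub_le _ _).trans (by
        have := hR n (j + i + 1) (hT' _ (by omega)); linarith))
    rw [e, Nat.cast_sub hm, sub_mul] at this
    exact this
/-- **Existence result.** For every `u₀` in the closure of the set `P` of preconditioned
initial values there exists an Obstacle Gradient Flow starting at `u₀`. -/
theorem existence_from_preconditioned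
    (E : H → ℝ) (E' : H → H) (α : ℝ) (hE : Assumption1 E E' α)
    (ζ : ℝ → ℝ) (hζ : Assumption2 E' ζ)
    (C : Set H) (hCne : C.Nonempty) (hCcl : IsClosed C) (hCcv : Convex ℝ C)
    (u₀ : H) (hu₀ : u₀ ∈ closure (preconditioned E C)) :
    ∃ u u' : ℝ → H, IsOGF C E' u u' u₀ := by
  let τ : ℕ → ℝ := fun n => (1 / 2) ^ (n + 1)
  have hτ0 : ∀ n, 0 < τ n := fun n => by simp only [τ]; positivity
  have hτ1 : ∀ n, τ n < 1 := fun n => pow_lt_one₀ (by norm_num) (by norm_num) (by omega)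
  have hEcont : Continuous E := continuous_iff_continuousAt.2 fun x =>
    (hE.grad x).hasFDerivAt.continuousAt
  have hex : ∀ n : ℕ, ∃ us : ℕ → H, us 0 ∈ C ∧ ‖us 0 - u₀‖ ≤ τ n ∧ E (us 0) ≤ E u₀ + 1 ∧
      ∀ k : ℕ, us (k + 1) ∈ C ∧
        ∀ z ∈ C, ‖us (k + 1) - us k‖ ^ 2 / (2 * τ n) + E (us (k + 1)) ≤
        ‖z - us k‖ ^ 2 / (2 * τ n) + E z := by
    intro n
    have h1 : Metric.ball u₀ (τ n) ∩ {x | E x < E u₀ + 1} ∈ 𝓝 u₀ :=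
      Filter.inter_mem (Metric.ball_mem_nhds _ (hτ0 n))
        (hEcont.continuousAt.eventually_lt continuousAt_const (by simp))
    obtain ⟨w, ⟨hw1, hw2⟩, hwC, us, hus, -⟩ := mem_closure_iff_nhds.1 hu₀ _ h1
    obtain ⟨h3, h4⟩ := hus (τ n) ⟨hτ0 n, hτ1 n⟩
    refine ⟨us (τ n), by rw [h3]; exact hwC, ?_, by rw [h3]; exact le_of_lt hw2, h4⟩
    rw [h3, ← dist_eq_norm]; exact (Metric.mem_ball.1 hw1).le
  choose b hb0 hbd hbE hbm using hex
  have hC : ∀ n k, b n k ∈ C := by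
    intro n k
    cases k with
    | zero => exact hb0 n
    | succ k => exact (hbm n k).1
  have hgrow : ∀ n k, ‖b n k - b n 0‖ ≤ (k:ℝ) * τ n / 2 + (E (b n 0) - E (b n k)) := by
    intro n k
    induction k with
    | zero => simp
    | succ k ih =>
      have h1 := (hbm n k).2 _ (hC n k)
      have h2 := norm_add_le (b n (k + 1) - b n k) (b n k - b n 0)
      rw [sub_add_sub_cancel] at h2
      rw [sub_self, norm_zero] at h1
      have h3 : ‖b n (k + 1) - b n k‖ ≤ τ n / 2 + ‖b n (k + 1) - b n k‖ ^ 2 / (2 * τ n) := by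
        have := hτ0 n
        have e : τ n / 2 + ‖b n (k + 1) - b n k‖ ^ 2 / (2 * τ n) - ‖b n (k + 1) - b n k‖ =
            (τ n - ‖b n (k + 1) - b n k‖) ^ 2 / (2 * τ n) := by field_simp; ring
        have : 0 ≤ (τ n - ‖b n (k + 1) - b n k‖) ^ 2 / (2 * τ n) := by positivity
        linarith
      push_cast
      simp only [ne_eq, OfNat.ofNat_ne_zero, not_false_eq_true, zero_pow, zero_div] at h1
      linarith
  obtain ⟨u, hu0, huC, huL, huE⟩ := core_aux E' hE.locLip.continuous C hCcl u₀ τ (fun _ => rfl) b hC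
    (fun n k v hv => euler_lagrange_aux E E' hE.grad C hCcv (τ n) (hτ0 n) _ _ (hC n (k + 1))
      (hbm n k).2 v hv) hbd (by
      intro T hT
      set R := ‖u₀‖ + 1 + T / 2 + (E u₀ + 1 - α) with hR
      have hα := hE.lowerBound u₀
      have hR0 : 0 < R := by have := norm_nonneg u₀; linarith
      obtain ⟨M, hM⟩ := hE.gradBdd R hR0
      have hM0 : 0 ≤ M := (norm_nonneg _).trans (hM 0 (by simpa using hR0.le))
      refine ⟨R, M, ζ (2 * R), hR0.le, hM0, hζ.nonneg _ (by positivity), ?_, hM, ?_⟩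
      · intro n k hk
        have h1 := hgrow n k
        have h2 := hbd n
        have h3 := hbE n
        have h4 := hE.lowerBound (b n k)
        have h5 := hτ1 n
        have h6 : ‖b n k‖ ≤ ‖b n k - b n 0‖ + ‖b n 0 - u₀‖ + ‖u₀‖ := by
          have := norm_add₃_le (a := b n k - b n 0) (b := b n 0 - u₀) (c := u₀)
          simpa using this
        linarith
      · intro x y hx hy
        refine (hζ.bound x y).trans ?_
        gcongr
        exact hζ.mono (by simp only [mem_Ici]; positivity) (by simp only [mem_Ici]; positivity)
          (by linarith))
  have hloc : ∀ N : ℝ, 0 < N → ∃ f : ℝ → H, ∃ K : ℝ≥0, LipschitzWith K f ∧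
      (∀ t, t ≤ N → f t = u t) ∧ (∀ t, t < N → deriv f t = deriv u t) ∧
      (∀ t, t < N → f =ᶠ[𝓝 t] u) := by
    intro N hN
    obtain ⟨K, hK⟩ := huL N hN
    have hev : ∀ t, t < N → (fun t => u (min t N)) =ᶠ[𝓝 t] u := by
      intro t ht
      filter_upwards [Iio_mem_nhds ht] with r hr
      rw [min_eq_left (le_of_lt hr)]
    refine ⟨fun t => u (min t N), K, ?_, fun t ht => by simp only [min_eq_left ht],
      fun t ht => (hev t ht).deriv_eq, hev⟩
    refine LipschitzWith.of_dist_le_mul fun s t => ?_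
    wlog hst : s ≤ t generalizing s t
    · rw [dist_comm, dist_comm s]; exact this t s (le_of_not_ge hst)
    have h1 := hK (min s N) (min t N) (min_le_min_right N hst) (min_le_right _ _)
    rw [dist_comm, dist_eq_norm, dist_comm, Real.dist_eq, abs_of_nonneg (by linarith)]
    refine h1.trans (mul_le_mul_of_nonneg_left ?_ K.2)
    rcases le_total s N with h | h <;> rcases le_total t N with h' | h' <;>
      simp [h, h'] <;> linarith
  have hder : ∀ᵐ t ∂(volume.restrict (Ioi (0:ℝ))), HasDerivAt u (deriv u t) t := by
    rw [ae_restrict_iff' measurableSet_Ioi]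
    have h1 : ∀ n : ℕ, ∀ᵐ t : ℝ, t ∈ Ioo 0 ((n:ℝ) + 1) → HasDerivAt u (deriv u t) t := by
      intro n
      obtain ⟨f, K, hf, -, hd, hev⟩ := hloc ((n:ℝ) + 1) (by positivity)
      filter_upwards [(lip_ae_aux f K hf ((n:ℝ) + 1) (by positivity)).1] with t ht h
      have := (ht h).congr_of_eventuallyEq (hev t h.2).symm
      rwa [hd t h.2] at this
    filter_upwards [ae_all_iff.2 h1] with t ht h
    obtain ⟨n, hn⟩ := exists_nat_gt t
    exact ht n ⟨h, by linarith⟩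
  refine ⟨u, deriv u, hu0, fun t _ => huC t, hder, ?_, ?_, ?_⟩
  · intro T hT
    obtain ⟨f, K, hf, -, hd, hev⟩ := hloc (T + 1) (by positivity)
    obtain ⟨-, hi, -⟩ := lip_ae_aux f K hf (T + 1) (by positivity)
    have hi' : IntegrableOn (deriv f) (Ioc 0 T) :=
      hi.mono_set (Ioc_subset_Ioc_right (by linarith))
    have : IntegrableOn (fun t => ‖deriv f t‖ ^ 2) (Ioc 0 T) := by
      refine Integrable.of_bound ?_ ((K:ℝ) ^ 2) ?_
      · exact hi'.aestronglyMeasurable.norm.pow 2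
      · refine Filter.Eventually.of_forall fun t => ?_
        rw [Real.norm_of_nonneg (by positivity)]
        have := norm_deriv_le_of_lipschitz hf (x₀ := t)
        gcongr
    refine this.congr_fun (fun t ht => ?_) measurableSet_Ioc
    simp only
    rw [hd t (by linarith [ht.2])]
  · intro s t hs hst
    obtain ⟨f, K, hf, he, hd, hev⟩ := hloc (t + 1) (by linarith)
    obtain ⟨-, -, hi⟩ := lip_ae_aux f K hf (t + 1) (by linarith)
    have := hi s t hs hst (by linarith)
    rw [he t (by linarith), he s (by linarith)] at this
    rw [this]
    refine intervalIntegral.integral_congr fun r hr => ?_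
    rw [uIcc_of_le hst] at hr
    exact hd r (by linarith [hr.2])
  · filter_upwards [hder, ae_restrict_mem measurableSet_Ioi] with t ht h0 v hv
    have h0' : (0:ℝ) < t := h0
    obtain ⟨K, hK⟩ := huE (t + 1) (by linarith) v hv
    have hsl := ht.tendsto_slope.mono_left
      (nhdsWithin_mono t (fun s (hs : s ∈ Ioi t) => (ne_of_gt hs : s ≠ t)))
    have hcu : Tendsto u (𝓝[>] t) (𝓝 (u t)) := ht.continuousAt.tendsto.mono_left nhdsWithin_le_nhds
    have hcv : Tendsto (fun r => v - u r) (𝓝[>] t) (𝓝 (v - u t)) := hcu.const_sub v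
    have hlim := (hsl.inner (𝕜 := ℝ) hcv).add (((hE.locLip.continuous.tendsto _).comp hcu).inner (𝕜 := ℝ) hcv)
    have hl0 : Tendsto (fun r : ℝ => -(K * (r - t))) (𝓝[>] t) (𝓝 0) := by
      have : Continuous fun r : ℝ => -(K * (r - t)) := by fun_prop
      have h := (this.tendsto t).mono_left (nhdsWithin_le_nhds (s := Ioi t))
      simpa using h
    refine le_of_tendsto_of_tendsto hl0 hlim ?_
    filter_upwards [Ioo_mem_nhdsGT (show t < t + 1 by linarith)] with r hr
    have hrt : 0 < r - t := by linarith [hr.1]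
    have h1 := hK t r h0'.le hr.1.le hr.2.le
    have h2 : ⟪u r - u t, v - u r⟫ = (r - t) * ⟪slope u t r, v - u r⟫ := by
      rw [slope_def_module, real_inner_smul_left, ← mul_assoc, mul_inv_cancel₀ hrt.ne', one_mul]
    rw [h2, ← mul_add] at h1
    have h3 : (r - t) * -(K * (r - t)) ≤
      (r - t) * (⟪slope u t r, v - u r⟫ + ⟪E' (u r), v - u r⟫) := by nlinarith
    exact le_of_mul_le_mul_left h3 hrt
end
end

section
/- Let ψ ∈ C⁰([0,1]) with ψ(0) < 0 and ψ(1) < 0, and suppose there is η > 0 such that ψ is C¹ on [0,η] and on [1−η,1]. Let u₀ ∈ W^{3,∞}(0,1) ∩ H with u₀''(0) = u₀''(1) = 0, and let (u(t))_{t≥0} be the Obstacle Gradient Flow for the elastic energy starting at u₀. Then one of the following holds: (1) there is a sequence θ_n → ∞ such that ‖u(θ_n)'‖_{L^∞(0,1)} → ∞; or (2) there exist a sequence θ_n → ∞ and u_∞ ∈ C such that u(θ_n) → u_∞ in W^{2,2}(0,1) and (∇E(u_∞), v − u_∞) ≥ 0 for all v ∈ C. -/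
open MeasureTheory Set Filter Topology

noncomputable section

/-- Membership in `H = W^{2,2}(0,1) ∩ W₀^{1,2}(0,1)`: `u1` is the (continuous) derivative of
`u` on `[0,1]`, `u1` is absolutely continuous with (integrable) derivative `u2 ∈ L²(0,1)`,
and `u(0) = u(1) = 0`. -/
def MemH (u u1 u2 : ℝ → ℝ) : Prop :=
  (∀ x ∈ Icc (0:ℝ) 1, HasDerivWithinAt u (u1 x) (Icc 0 1) x) ∧
  (∀ x ∈ Icc (0:ℝ) 1, u1 x = u1 0 + ∫ t in (0:ℝ)..x, u2 t) ∧
  IntegrableOn u2 (Icc (0:ℝ) 1) ∧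
  IntegrableOn (fun x => (u2 x) ^ 2) (Icc (0:ℝ) 1) ∧
  u 0 = 0 ∧ u 1 = 0

/-- Membership in the obstacle set `C = { u ∈ H : u ≥ ψ a.e. }`. -/
def MemC (ψ : ℝ → ℝ) (u u1 u2 : ℝ → ℝ) : Prop :=
  MemH u u1 u2 ∧ ∀ᵐ x ∂(volume.restrict (Icc (0:ℝ) 1)), ψ x ≤ u x

/-- The inner product of `H`: `(u,v) = ∫₀¹ u'' v''` (in terms of the second derivatives). -/
def Hip (u2 v2 : ℝ → ℝ) : ℝ := ∫ x in (0:ℝ)..1, u2 x * v2 x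

/-- The norm of `H`: `‖u‖ = (∫₀¹ (u'')²)^{1/2}` (in terms of the second derivative). -/
def Hnorm (u2 : ℝ → ℝ) : ℝ := Real.sqrt (∫ x in (0:ℝ)..1, (u2 x) ^ 2)

/-- The elastic (Willmore / Euler) bending energy `E(u) = ∫₀¹ u''²/(1+u'²)^{5/2}`. -/
def elE (u1 u2 : ℝ → ℝ) : ℝ :=
  ∫ x in (0:ℝ)..1, (u2 x) ^ 2 / (1 + (u1 x) ^ 2) ^ ((5:ℝ)/2)

/-- The gradient pairing of the elastic energy:
`(∇E(u), φ) = 2∫₀¹ u''φ''/(1+u'²)^{5/2} - 5∫₀¹ u''²u'φ'/(1+u'²)^{7/2}`. -/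
def elDE (u1 u2 φ1 φ2 : ℝ → ℝ) : ℝ :=
  2 * (∫ x in (0:ℝ)..1, u2 x * φ2 x / (1 + (u1 x) ^ 2) ^ ((5:ℝ)/2))
  - 5 * (∫ x in (0:ℝ)..1, (u2 x) ^ 2 * u1 x * φ1 x / (1 + (u1 x) ^ 2) ^ ((7:ℝ)/2))

/-- An Obstacle Gradient Flow for the elastic energy on
`H = W^{2,2}(0,1) ∩ W₀^{1,2}(0,1)` with obstacle set `C = {u ∈ H : u ≥ ψ a.e.}`:
the curve `t ↦ u(t)` (with space derivatives `u1, u2`) starts at `u₀`, stays in `C`,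
is locally `W^{1,2}` in time with values in `H` and a.e. time derivative `v(t) ∈ H`
(with space derivatives `v1, v2`), and satisfies the flow variational inequality
`(u̇(t), w - u(t)) + (∇E(u(t)), w - u(t)) ≥ 0` for all `w ∈ C`, for a.e. `t > 0`. -/
structure IsOGFel (ψ : ℝ → ℝ) (u u1 u2 v v1 v2 : ℝ → ℝ → ℝ)
    (u₀ u₀1 u₀2 : ℝ → ℝ) : Prop where
  init : ∀ x, u 0 x = u₀ x
  init1 : ∀ x ∈ Icc (0:ℝ) 1, u1 0 x = u₀1 x
  init2 : ∀ x ∈ Icc (0:ℝ) 1, u2 0 x = u₀2 x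
  memC : ∀ t : ℝ, 0 ≤ t → MemC ψ (u t) (u1 t) (u2 t)
  vMemH : ∀ᵐ t ∂(volume.restrict (Ioi (0:ℝ))), MemH (v t) (v1 t) (v2 t)
  derivAe : ∀ᵐ t ∂(volume.restrict (Ioi (0:ℝ))),
    Filter.Tendsto (fun h : ℝ => Hnorm (fun x => (u2 (t + h) x - u2 t x) / h - v2 t x))
      (nhdsWithin (0:ℝ) {(0:ℝ)}ᶜ) (nhds 0)
  ftc : ∀ s t : ℝ, 0 ≤ s → s ≤ t → ∀ x ∈ Icc (0:ℝ) 1,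
    u t x - u s x = ∫ r in s..t, v r x
  sqInt : ∀ T : ℝ, 0 < T →
    IntegrableOn (fun t => ∫ x in (0:ℝ)..1, (v2 t x) ^ 2) (Ioc 0 T)
  fvi : ∀ᵐ t ∂(volume.restrict (Ioi (0:ℝ))), ∀ w w1 w2 : ℝ → ℝ, MemC ψ w w1 w2 →
    0 ≤ Hip (v2 t) (fun x => w2 x - u2 t x)
        + elDE (u1 t) (u2 t) (fun x => w1 x - u1 t x) (fun x => w2 x - u2 t x)




def gg (p : ℝ) : ℝ := ((1 + p ^ 2) ^ ((5:ℝ)/2))⁻¹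
def gg1 (p : ℝ) : ℝ := -5 * p * ((1 + p ^ 2) ^ ((7:ℝ)/2))⁻¹
def gg2 (p : ℝ) : ℝ := -5 * ((1 + p ^ 2) ^ ((7:ℝ)/2))⁻¹ + 35 * p ^ 2 * ((1 + p ^ 2) ^ ((9:ℝ)/2))⁻¹

lemma one_add_sq_pos' (p : ℝ) : 0 < 1 + p ^ 2 := by positivity

lemma gg_eq (p : ℝ) : gg p = (1 + p ^ 2) ^ (-((5:ℝ)/2)) := by
  rw [gg, Real.rpow_neg (one_add_sq_pos' p).le]

lemma hasDerivAt_pw (p a : ℝ) :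
    HasDerivAt (fun p : ℝ => ((1 + p ^ 2) ^ a)⁻¹) (-(2 * a) * p * ((1 + p ^ 2) ^ (a+1))⁻¹) p := by
  have h1 : HasDerivAt (fun p : ℝ => 1 + p ^ 2) (2 * p) p := by
    simpa using (hasDerivAt_pow 2 p).const_add 1
  have h2 := h1.rpow_const (p := -a) (Or.inl (one_add_sq_pos' p).ne')
  have e : (fun p : ℝ => ((1 + p ^ 2) ^ a)⁻¹) = fun p : ℝ => (1 + p ^ 2) ^ (-a) := by
    ext q; rw [Real.rpow_neg (one_add_sq_pos' q).le]
  rw [e]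
  convert h2 using 1
  rw [← Real.rpow_neg (one_add_sq_pos' p).le]
  have : -(a+1) = -a - 1 := by ring
  rw [this]; ring

lemma hasDerivAt_gg (p : ℝ) : HasDerivAt gg (gg1 p) p := by
  have := hasDerivAt_pw p (5/2)
  exact this.congr_deriv (by rw [gg1]; norm_num)

lemma hasDerivAt_gg1 (p : ℝ) : HasDerivAt gg1 (gg2 p) p := by
  have h := hasDerivAt_pw p (7/2)
  have h2 : HasDerivAt (fun p : ℝ => -5 * p) (-5) p := by
    simpa using (hasDerivAt_id p).const_mul (-5)
  exact (h2.mul h).congr_deriv (by rw [gg2]; norm_num; ring)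

lemma inv_pw_le (p a : ℝ) (ha : 0 ≤ a) : ((1 + p ^ 2) ^ a)⁻¹ ≤ 1 :=
  inv_le_one_of_one_le₀ (Real.one_le_rpow (by nlinarith [sq_nonneg p]) ha)

lemma inv_pw_nonneg (p a : ℝ) : 0 ≤ ((1 + p ^ 2) ^ a)⁻¹ := by positivity

lemma sq_mul_inv_pw_le (p a : ℝ) (ha : 1 ≤ a) : p ^ 2 * ((1 + p ^ 2) ^ a)⁻¹ ≤ 1 := by
  rw [← div_eq_mul_inv, div_le_one (by positivity)]
  calc p ^ 2 ≤ (1 + p ^ 2) ^ (1:ℝ) := by rw [Real.rpow_one]; linarith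
    _ ≤ _ := Real.rpow_le_rpow_of_exponent_le (by nlinarith [sq_nonneg p]) ha

lemma gg_pos (p : ℝ) : 0 < gg p := by rw [gg]; positivity
lemma gg_le (p : ℝ) : gg p ≤ 1 := inv_pw_le p _ (by norm_num)
lemma gg_anti {p R : ℝ} (h : |p| ≤ R) : gg R ≤ gg p := by
  rw [gg, gg]
  have := sq_le_sq' (abs_le.1 h).1 (abs_le.1 h).2
  apply inv_anti₀ (by positivity)
  apply Real.rpow_le_rpow (by positivity) (by linarith) (by norm_num)

lemma abs_gg1_le (p : ℝ) : |gg1 p| ≤ 5 := by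
  have h1 := inv_pw_le p (7/2) (by norm_num)
  have h2 := inv_pw_nonneg p (7/2)
  have h3 := sq_mul_inv_pw_le p (7/2) (by norm_num)
  rw [gg1]
  set k := ((1 + p ^ 2) ^ ((7:ℝ)/2))⁻¹
  have : (p * k)^2 ≤ 1 := by
    have : (p * k)^2 = (p^2 * k) * k := by ring
    rw [this]; exact mul_le_one₀ h3 h2 h1
  have := abs_le_one_iff_mul_self_le_one.2 (by linarith [sq (p*k)] : p * k * (p * k) ≤ 1)
  rw [show -5 * p * k = -5 * (p * k) by ring, abs_mul, show |(-5:ℝ)| = 5 by norm_num]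
  linarith

lemma abs_gg2_le (p : ℝ) : |gg2 p| ≤ 40 := by
  have h1 := inv_pw_le p (7/2) (by norm_num)
  have h2 := inv_pw_nonneg p (7/2)
  have h3 := sq_mul_inv_pw_le p (9/2) (by norm_num)
  have h4 := inv_pw_nonneg p (9/2)
  have h5 : 0 ≤ p ^ 2 * ((1 + p ^ 2) ^ ((9:ℝ)/2))⁻¹ := by positivity
  rw [gg2, abs_le]; constructor <;> linarith

lemma gg_lip (p q : ℝ) : |gg p - gg q| ≤ 5 * |p - q| := by
  have := Convex.norm_image_sub_le_of_norm_hasDerivWithin_le (s := univ) (f := gg) (f' := gg1) (C := 5)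
    (x := q) (y := p)
    (fun x _ => (hasDerivAt_gg x).hasDerivWithinAt) (fun x _ => abs_gg1_le x) convex_univ trivial trivial
  simpa using this

lemma gg1_lip (p q : ℝ) : |gg1 p - gg1 q| ≤ 40 * |p - q| := by
  have := Convex.norm_image_sub_le_of_norm_hasDerivWithin_le (s := univ) (f := gg1) (f' := gg2) (C := 40)
    (x := q) (y := p)
    (fun x _ => (hasDerivAt_gg1 x).hasDerivWithinAt) (fun x _ => abs_gg2_le x) convex_univ trivial trivial
  simpa using this

lemma gg_quad (p q : ℝ) : |gg q - gg p - gg1 p * (q - p)| ≤ 40 * |q - p| ^ 2 := by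
  have := Convex.norm_image_sub_le_of_norm_hasDerivWithin_le (s := uIcc p q)
    (f := fun s => gg s - gg1 p * s) (f' := fun s => gg1 s - gg1 p) (C := 40 * |q - p|)
    (x := p) (y := q)
    (fun x _ => ((hasDerivAt_gg x).sub (by simpa using (hasDerivAt_id x).const_mul (gg1 p))).hasDerivWithinAt)
    (fun x hx => (gg1_lip x p).trans (by
      have := abs_sub_left_of_mem_uIcc hx
      gcongr)) (convex_uIcc p q) left_mem_uIcc right_mem_uIcc
  simp only [Real.norm_eq_abs] at this
  convert this using 1
  · congr 1; ring
  · ring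

lemma continuous_gg : Continuous gg := continuous_iff_continuousAt.2 fun p => (hasDerivAt_gg p).continuousAt
lemma continuous_gg1 : Continuous gg1 := continuous_iff_continuousAt.2 fun p => (hasDerivAt_gg1 p).continuousAt

abbrev XX := BoundedContinuousFunction (Icc (0:ℝ) 1) ℝ

def GG (p : XX) : XX := BoundedContinuousFunction.mkOfCompact ⟨fun x => gg (p x), continuous_gg.comp p.continuous⟩
def GG1 (p : XX) : XX := BoundedContinuousFunction.mkOfCompact ⟨fun x => gg1 (p x), continuous_gg1.comp p.continuous⟩

@[simp] lemma GG_apply (p : XX) (x) : GG p x = gg (p x) := rfl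
@[simp] lemma GG1_apply (p : XX) (x) : GG1 p x = gg1 (p x) := rfl

lemma GG_norm (p : XX) : ‖GG p‖ ≤ 1 := by
  rw [BoundedContinuousFunction.norm_le (by norm_num)]
  intro x; rw [GG_apply, Real.norm_eq_abs, abs_of_pos (gg_pos _)]; exact gg_le _

lemma GG1_norm (p : XX) : ‖GG1 p‖ ≤ 5 := by
  rw [BoundedContinuousFunction.norm_le (by norm_num)]
  intro x; exact abs_gg1_le _

lemma XX_abs_le (p : XX) (x) : |p x| ≤ ‖p‖ := p.norm_coe_le_norm x

lemma GG_lip (p q : XX) : ‖GG p - GG q‖ ≤ 5 * ‖p - q‖ := by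
  rw [BoundedContinuousFunction.norm_le (by positivity)]
  intro x
  refine (gg_lip _ _).trans ?_
  have := XX_abs_le (p - q) x
  simp only [BoundedContinuousFunction.coe_sub, Pi.sub_apply] at this
  linarith

lemma GG1_lip (p q : XX) : ‖GG1 p - GG1 q‖ ≤ 40 * ‖p - q‖ := by
  rw [BoundedContinuousFunction.norm_le (by positivity)]
  intro x
  refine (gg1_lip _ _).trans ?_
  have := XX_abs_le (p - q) x
  simp only [BoundedContinuousFunction.coe_sub, Pi.sub_apply] at this
  linarith

lemma GG_quad (p q : XX) : ‖GG q - GG p - GG1 p * (q - p)‖ ≤ 40 * ‖q - p‖ ^ 2 := by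
  rw [BoundedContinuousFunction.norm_le (by positivity)]
  intro x
  refine (gg_quad _ _).trans ?_
  have := XX_abs_le (q - p) x
  simp only [BoundedContinuousFunction.coe_sub, Pi.sub_apply] at this
  gcongr

lemma continuous_GG : Continuous GG :=
  (LipschitzWith.of_dist_le_mul (K := 5) fun p q => by
    simpa [dist_eq_norm] using GG_lip p q).continuous
lemma continuous_GG1 : Continuous GG1 :=
  (LipschitzWith.of_dist_le_mul (K := 40) fun p q => by
    simpa [dist_eq_norm] using GG1_lip p q).continuous

lemma hasFDerivAt_GG (p : XX) : HasFDerivAt GG (ContinuousLinearMap.mul ℝ XX (GG1 p)) p := by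
  rw [hasFDerivAt_iff_isLittleO]
  have h : (fun q => GG q - GG p - (ContinuousLinearMap.mul ℝ XX (GG1 p)) (q - p)) =O[𝓝 p]
      fun q => ‖q - p‖ ^ 2 :=
    Asymptotics.IsBigO.of_bound 40 (Eventually.of_forall fun q => by
      simpa using GG_quad p q)
  refine h.trans_isLittleO ?_
  exact Asymptotics.isLittleO_pow_sub_sub p (by norm_num)


section abstractFlow

variable {L : Type*} [NormedAddCommGroup L] [InnerProductSpace ℝ L]

def EE (M : XX →L[ℝ] L →L[ℝ] L) (P : L →L[ℝ] XX) (f : L) : ℝ := inner ℝ (M (GG (P f)) f) f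

def DD (M : XX →L[ℝ] L →L[ℝ] L) (P : L →L[ℝ] XX) (f h : L) : ℝ :=
  2 * inner ℝ (M (GG (P f)) f) h + inner ℝ (M (GG1 (P f) * P h) f) f

lemma continuous_DD (M : XX →L[ℝ] L →L[ℝ] L) (P : L →L[ℝ] XX) :
    Continuous (fun q : L × L => DD M P q.1 q.2) := by
  unfold DD
  have h1 := continuous_GG
  have h2 := continuous_GG1
  fun_prop

lemma DD_smul (M : XX →L[ℝ] L →L[ℝ] L) (P : L →L[ℝ] XX) (f h : L) (c : ℝ) :
    DD M P f (c • h) = c * DD M P f h := by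
  simp only [DD, map_smul, inner_smul_right, mul_smul_comm, ContinuousLinearMap.smul_apply,
    real_inner_smul_left]
  ring

lemma inner_M_le (M : XX →L[ℝ] L →L[ℝ] L) (hM : ∀ a f, ‖M a f‖ ≤ ‖a‖ * ‖f‖) (a : XX) (f h : L) :
    |inner ℝ (M a f) h| ≤ ‖a‖ * ‖f‖ * ‖h‖ :=
  (abs_real_inner_le_norm _ _).trans (by gcongr; exact hM a f)

lemma hasDerivAt_EE (M : XX →L[ℝ] L →L[ℝ] L) (P : L →L[ℝ] XX)
    (hs : ∀ a f h, inner ℝ (M a f) h = inner ℝ (M a h) f)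
    (U : ℝ → L) (V : L) (t : ℝ) (hU : HasDerivAt U V t) :
    HasDerivAt (fun t => EE M P (U t)) (DD M P (U t) V) t := by
  have h1 : HasDerivAt (fun t => P (U t)) (P V) t := P.hasFDerivAt.comp_hasDerivAt t hU
  have h2 := (hasFDerivAt_GG (P (U t))).comp_hasDerivAt t h1
  have h3 := M.hasFDerivAt.comp_hasDerivAt t h2
  have h4 := (h3.clm_apply hU).inner ℝ hU
  refine h4.congr_deriv ?_
  simp only [DD, Function.comp, ContinuousLinearMap.mul_apply', inner_add_left]
  rw [hs _ V]; ring

lemma EE_lip (M : XX →L[ℝ] L →L[ℝ] L) (P : L →L[ℝ] XX) (hM : ∀ a f, ‖M a f‖ ≤ ‖a‖ * ‖f‖)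
    (R : ℝ) (f f' : L) (hf : ‖f‖ ≤ R) (hf' : ‖f'‖ ≤ R) :
    |EE M P f - EE M P f'| ≤ (2 * R + 5 * ‖P‖ * R ^ 2) * ‖f - f'‖ := by
  have hR : 0 ≤ R := (norm_nonneg f).trans hf
  have e : EE M P f - EE M P f' = inner ℝ (M (GG (P f)) (f - f')) f
      + inner ℝ (M (GG (P f) - GG (P f')) f') f + inner ℝ (M (GG (P f')) f') (f - f') := by
    simp only [EE, map_sub, ContinuousLinearMap.sub_apply, inner_sub_left, inner_sub_right]
    ring
  have h1 := inner_M_le M hM (GG (P f)) (f - f') f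
  have h2 := inner_M_le M hM (GG (P f) - GG (P f')) f' f
  have h3 := inner_M_le M hM (GG (P f')) f' (f - f')
  have k1 : ‖GG (P f) - GG (P f')‖ ≤ 5 * (‖P‖ * ‖f - f'‖) := by
    refine (GG_lip _ _).trans ?_
    rw [← map_sub]
    gcongr
    exact P.le_opNorm _
  have l1 : ‖GG (P f)‖ * ‖f - f'‖ * ‖f‖ ≤ 1 * ‖f - f'‖ * R := by
    gcongr; exact GG_norm _
  have l2 : ‖GG (P f) - GG (P f')‖ * ‖f'‖ * ‖f‖ ≤ 5 * (‖P‖ * ‖f - f'‖) * R * R := by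
    gcongr
  have l3 : ‖GG (P f')‖ * ‖f'‖ * ‖f - f'‖ ≤ 1 * R * ‖f - f'‖ := by
    gcongr; exact GG_norm _
  rw [e]
  refine (abs_add_three _ _ _).trans ?_
  nlinarith

lemma ac_of_dom {F N : ℝ → ℝ} {a b C : ℝ} (hC : 0 ≤ C) (hN : AbsolutelyContinuousOnInterval N a b)
    (h : ∀ s ∈ uIcc a b, ∀ t ∈ uIcc a b, dist (F s) (F t) ≤ C * dist (N s) (N t)) :
    AbsolutelyContinuousOnInterval F a b := by
  have hN' := hN.const_mul C
  rw [absolutelyContinuousOnInterval_iff] at hN' ⊢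
  intro ε hε
  obtain ⟨δ, hδ, H⟩ := hN' ε hε
  refine ⟨δ, hδ, fun E hE hl => lt_of_le_of_lt (Finset.sum_le_sum fun i hi => ?_) (H E hE hl)⟩
  have := h _ (hE.1 i hi).1 _ (hE.1 i hi).2
  refine this.trans (le_of_eq ?_)
  rw [Real.dist_eq, Real.dist_eq, ← mul_sub, abs_mul, abs_of_nonneg hC]

lemma cauchy_est (M : XX →L[ℝ] L →L[ℝ] L) (P : L →L[ℝ] XX) (hM : ∀ a f, ‖M a f‖ ≤ ‖a‖ * ‖f‖)
    (hpos : ∀ (c : ℝ) a f, (∀ x, c ≤ a x) → c * ‖f‖ ^ 2 ≤ inner ℝ (M a f) f)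
    (R c : ℝ) (f f' V V' : L) (hf : ‖f‖ ≤ R) (hf' : ‖f'‖ ≤ R) (hc : ∀ x, c ≤ GG (P f) x)
    (h1 : 0 ≤ inner ℝ V (f' - f) + DD M P f (f' - f))
    (h2 : 0 ≤ inner ℝ V' (f - f') + DD M P f' (f - f')) :
    2 * c * ‖f - f'‖ ^ 2 ≤ 2 * R * (‖V‖ + ‖V'‖) + 30 * R ^ 2 * ‖P f - P f'‖ := by
  have hR : 0 ≤ R := (norm_nonneg f).trans hf
  have hk : ‖f - f'‖ ≤ 2 * R := (norm_sub_le _ _).trans (by linarith)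
  have e : inner ℝ V (f' - f) + DD M P f (f' - f) + (inner ℝ V' (f - f') + DD M P f' (f - f'))
      = inner ℝ V' (f - f') - inner ℝ V (f - f') - 2 * inner ℝ (M (GG (P f)) (f - f')) (f - f')
        - 2 * inner ℝ (M (GG (P f) - GG (P f')) f') (f - f')
        - inner ℝ (M (GG1 (P f) * P (f - f')) f) f + inner ℝ (M (GG1 (P f') * P (f - f')) f') f' := by
    simp only [DD, map_sub, ContinuousLinearMap.sub_apply, inner_sub_left, inner_sub_right, mul_sub]
    ring
  have a1 := abs_real_inner_le_norm V (f - f')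
  have a2 := abs_real_inner_le_norm V' (f - f')
  have a3 := hpos c _ (f - f') hc
  have a4 := inner_M_le M hM (GG (P f) - GG (P f')) f' (f - f')
  have a5 := inner_M_le M hM (GG1 (P f) * P (f - f')) f f
  have a6 := inner_M_le M hM (GG1 (P f') * P (f - f')) f' f'
  have b1 : ‖V‖ * ‖f - f'‖ ≤ ‖V‖ * (2 * R) := by gcongr
  have b2 : ‖V'‖ * ‖f - f'‖ ≤ ‖V'‖ * (2 * R) := by gcongr
  have b4 : ‖GG (P f) - GG (P f')‖ * ‖f'‖ * ‖f - f'‖ ≤ (5 * ‖P f - P f'‖) * R * (2 * R) := by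
    gcongr; exact GG_lip _ _
  have b0 : ∀ q, ‖GG1 q * P (f - f')‖ ≤ 5 * ‖P f - P f'‖ := fun q => by
    rw [map_sub]
    exact (norm_mul_le _ _).trans (by gcongr; exact GG1_norm _)
  have b5 : ‖GG1 (P f) * P (f - f')‖ * ‖f‖ * ‖f‖ ≤ (5 * ‖P f - P f'‖) * R * R := by
    gcongr; exact b0 _
  have b6 : ‖GG1 (P f') * P (f - f')‖ * ‖f'‖ * ‖f'‖ ≤ (5 * ‖P f - P f'‖) * R * R := by
    gcongr; exact b0 _
  have := abs_le.1 a1; have := abs_le.1 a2; have := abs_le.1 a4; have := abs_le.1 a5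
  have := abs_le.1 a6
  nlinarith

lemma energy_diss [CompleteSpace L] (M : XX →L[ℝ] L →L[ℝ] L) (P : L →L[ℝ] XX)
    (hM : ∀ a f, ‖M a f‖ ≤ ‖a‖ * ‖f‖)
    (hs : ∀ a f h, inner ℝ (M a f) h = inner ℝ (M a h) f)
    (𝒞 : Set L) (U V : ℝ → L) (hUC : ∀ t, 0 ≤ t → U t ∈ 𝒞)
    (hder : ∀ᵐ t ∂(volume.restrict (Ioi (0:ℝ))), HasDerivAt U (V t) t)
    (hVi : ∀ T, 0 < T → IntervalIntegrable V volume 0 T)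
    (hV2 : ∀ T, 0 < T → IntervalIntegrable (fun t => ‖V t‖ ^ 2) volume 0 T)
    (hftc : ∀ s t, 0 ≤ s → s ≤ t → U t - U s = ∫ r in s..t, V r)
    (hfvi : ∀ᵐ t ∂(volume.restrict (Ioi (0:ℝ))), ∀ z ∈ 𝒞,
      0 ≤ inner ℝ (V t) (z - U t) + DD M P (U t) (z - U t)) (T : ℝ) (hT : 0 < T) :
    EE M P (U T) + ∫ t in (0:ℝ)..T, ‖V t‖ ^ 2 ≤ EE M P (U 0) := by
  have hd : ∀ᵐ t ∂(volume.restrict (Ioi (0:ℝ))), deriv (fun t => EE M P (U t)) t ≤ - ‖V t‖ ^ 2 := by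
    filter_upwards [hder, hfvi, ae_restrict_mem measurableSet_Ioi] with t h1 h2 ht
    rw [(hasDerivAt_EE M P hs U (V t) t h1).deriv]
    have h3 := h1.tendsto_slope_zero_left
    have hcont : Continuous (fun k : L => inner ℝ (V t) k + DD M P (U t) k) := by
      have := continuous_DD M P
      fun_prop
    have h4 := (hcont.tendsto (V t)).comp h3
    have h5 : inner ℝ (V t) (V t) + DD M P (U t) (V t) ≤ 0 := by
      refine le_of_tendsto h4 ?_
      have ev : ∀ᶠ h : ℝ in 𝓝[<] 0, -t < h := by
        apply eventually_nhdsWithin_of_eventually_nhds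
        exact lt_mem_nhds (by simpa using ht)
      filter_upwards [ev, self_mem_nhdsWithin] with h hh1 hh2
      have := h2 (U (t + h)) (hUC _ (by linarith))
      simp only [Function.comp, inner_smul_right, DD_smul]
      rw [← mul_add]
      exact mul_nonpos_of_nonpos_of_nonneg (inv_nonpos.2 (le_of_lt hh2)) this
    rw [real_inner_self_eq_norm_sq] at h5
    linarith
  have hU : ∀ t ∈ Icc 0 T, U t = U 0 + ∫ r in (0:ℝ)..t, V r := fun t ht => by
    rw [← hftc 0 t le_rfl ht.1]; abel
  have hcont : ContinuousOn U (Icc 0 T) := by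
    have : ContinuousOn (fun t => U 0 + ∫ r in (0:ℝ)..t, V r) (Icc 0 T) := by
      have := intervalIntegral.continuousOn_primitive_interval' (hVi T hT) left_mem_uIcc
      rw [uIcc_of_le hT.le] at this
      exact continuousOn_const.add this
    exact this.congr hU
  obtain ⟨R, hR⟩ := (isCompact_Icc.image_of_continuousOn hcont).isBounded.exists_norm_le
  have hR' : ∀ t ∈ Icc 0 T, ‖U t‖ ≤ R := fun t ht => hR _ (mem_image_of_mem _ ht)
  have hR0 : 0 ≤ R := (norm_nonneg _).trans (hR' 0 ⟨le_rfl, hT.le⟩)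
  have hNi := (hVi T hT).norm
  have hac : AbsolutelyContinuousOnInterval (fun t => EE M P (U t)) 0 T := by
    refine ac_of_dom (C := 2 * R + 5 * ‖P‖ * R ^ 2) (by positivity)
      (hNi.absolutelyContinuousOnInterval_intervalIntegral (c := 0) left_mem_uIcc) ?_
    rw [uIcc_of_le hT.le]
    have key : ∀ s ∈ Icc 0 T, ∀ t ∈ Icc 0 T, s ≤ t → dist (EE M P (U s)) (EE M P (U t)) ≤
        (2 * R + 5 * ‖P‖ * R ^ 2) * dist (∫ v in (0:ℝ)..s, ‖V v‖) (∫ v in (0:ℝ)..t, ‖V v‖) := by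
      intro s hs t ht hst
      have hsub : ∀ a ∈ Icc 0 T, IntervalIntegrable (fun v => ‖V v‖) volume 0 a := fun a ha =>
        hNi.mono_set (uIcc_subset_uIcc left_mem_uIcc (by rw [uIcc_of_le hT.le]; exact ha))
      rw [dist_comm, Real.dist_eq]
      refine (EE_lip M P hM R _ _ (hR' t ht) (hR' s hs)).trans ?_
      gcongr
      rw [hftc s t hs.1 hst, dist_comm, Real.dist_eq,
        intervalIntegral.integral_interval_sub_left (hsub t ht) (hsub s hs)]
      exact (intervalIntegral.norm_integral_le_integral_norm hst).trans (le_abs_self _)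
    intro s hs t ht
    rcases le_total s t with h | h
    · exact key s hs t ht h
    · rw [dist_comm, dist_comm (∫ v in (0:ℝ)..s, ‖V v‖)]; exact key t ht s hs h
  have h1 := hac.integral_deriv_eq_sub
  have h2 : ∫ t in (0:ℝ)..T, deriv (fun t => EE M P (U t)) t ≤ ∫ t in (0:ℝ)..T, - ‖V t‖ ^ 2 := by
    refine intervalIntegral.integral_mono_ae_restrict hT.le hac.intervalIntegrable_deriv (hV2 T hT).neg ?_
    have : volume.restrict (Icc (0:ℝ) T) = volume.restrict (Ioc 0 T) :=
      Measure.restrict_congr_set Ioc_ae_eq_Icc.symm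
    rw [this]
    exact ae_mono (Measure.restrict_mono Ioc_subset_Ioi_self le_rfl) hd
  rw [h1, intervalIntegral.integral_neg] at h2
  linarith

theorem abs_flow [CompleteSpace L] (M : XX →L[ℝ] L →L[ℝ] L) (P : L →L[ℝ] XX)
    (hM : ∀ a f, ‖M a f‖ ≤ ‖a‖ * ‖f‖)
    (hs : ∀ a f h, inner ℝ (M a f) h = inner ℝ (M a h) f)
    (hpos : ∀ (c : ℝ) a f, (∀ x, c ≤ a x) → c * ‖f‖ ^ 2 ≤ inner ℝ (M a f) f)
    (hP : ∀ (R : ℝ) (f : ℕ → L), (∀ n, ‖f n‖ ≤ R) → ∃ φ : ℕ → ℕ, StrictMono φ ∧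
      CauchySeq (fun n => P (f (φ n))))
    (𝒞 : Set L) (hcl : IsClosed 𝒞) (U V : ℝ → L) (hUC : ∀ t, 0 ≤ t → U t ∈ 𝒞)
    (hder : ∀ᵐ t ∂(volume.restrict (Ioi (0:ℝ))), HasDerivAt U (V t) t)
    (hVi : ∀ T, 0 < T → IntervalIntegrable V volume 0 T)
    (hV2 : ∀ T, 0 < T → IntervalIntegrable (fun t => ‖V t‖ ^ 2) volume 0 T)
    (hftc : ∀ s t, 0 ≤ s → s ≤ t → U t - U s = ∫ r in s..t, V r)
    (hfvi : ∀ᵐ t ∂(volume.restrict (Ioi (0:ℝ))), ∀ z ∈ 𝒞,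
      0 ≤ inner ℝ (V t) (z - U t) + DD M P (U t) (z - U t))
    (T0 R0 : ℝ) (hbd : ∀ t, T0 ≤ t → 0 ≤ t → ∀ x, |P (U t) x| ≤ R0) :
    ∃ θ : ℕ → ℝ, (∀ n, 0 ≤ θ n) ∧ Tendsto θ atTop atTop ∧ ∃ w ∈ 𝒞,
      Tendsto (fun n => U (θ n)) atTop (𝓝 w) ∧ ∀ z ∈ 𝒞, 0 ≤ DD M P w (z - w) := by
  have hE := energy_diss M P hM hs 𝒞 U V hUC hder hVi hV2 hftc hfvi
  set c := gg R0 with hc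
  have hc0 : 0 < c := gg_pos _
  have hcG : ∀ t, T0 ≤ t → 0 ≤ t → ∀ x, c ≤ GG (P (U t)) x := fun t h1 h2 x =>
    gg_anti (hbd t h1 h2 x)
  have hEnn : ∀ f, 0 ≤ EE M P f := fun f => by
    have := hpos 0 (GG (P f)) f (fun x => (gg_pos _).le)
    simpa [EE] using this
  have hI0 : ∀ T, 0 < T → 0 ≤ ∫ t in (0:ℝ)..T, ‖V t‖ ^ 2 := fun T hT =>
    intervalIntegral.integral_nonneg hT.le (fun t _ => by positivity)
  set E0 := EE M P (U 0)
  set R := Real.sqrt (E0 / c)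
  have hUR : ∀ t, T0 ≤ t → 0 < t → ‖U t‖ ≤ R := fun t h1 h2 => by
    apply Real.le_sqrt_of_sq_le
    rw [le_div_iff₀ hc0, mul_comm]
    have := hpos c _ (U t) (hcG t h1 h2.le)
    have h3 := hE t h2
    have h4 := hI0 t h2
    change c * ‖U t‖ ^ 2 ≤ EE M P (U t) at this
    linarith
  have hex : ∀ n : ℕ, ∃ t : ℝ, (n:ℝ) + 1 ≤ t ∧ T0 ≤ t ∧ ‖V t‖ ≤ 1 / ((n:ℝ) + 1) ∧ ∀ z ∈ 𝒞,
      0 ≤ inner ℝ (V t) (z - U t) + DD M P (U t) (z - U t) := by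
    intro n
    by_contra hcon
    push Not at hcon
    set a := max ((n:ℝ) + 1) T0 with ha
    have ha0 : 0 < a := lt_of_lt_of_le (by positivity) (le_max_left _ _)
    set ε := (1 / ((n:ℝ) + 1)) with hε
    have hε0 : 0 < ε := by positivity
    have hae : ∀ᵐ t ∂(volume.restrict (Ioi (0:ℝ))), a ≤ t → ε ^ 2 ≤ ‖V t‖ ^ 2 := by
      filter_upwards [hfvi] with t ht hat
      by_contra hlt
      have : ‖V t‖ ≤ ε := by
        by_contra hh
        push Not at hh hlt
        have : ε ^ 2 ≤ ‖V t‖ ^ 2 := by gcongr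
        linarith
      obtain ⟨z, hz, hz'⟩ := hcon t ((le_max_left _ _).trans hat) ((le_max_right _ _).trans hat) this
      exact absurd (ht z hz) (not_le.2 hz')
    set T := a + (E0 + 1) / ε ^ 2 with hT
    have hE0 : 0 ≤ E0 := hEnn _
    have hq : 0 < (E0 + 1) / ε ^ 2 := by positivity
    have haT : a ≤ T := by linarith
    have hT0 : 0 < T := by linarith
    have i2 := hV2 T hT0
    have i3 : IntervalIntegrable (fun t => ‖V t‖ ^ 2) volume a T :=
      i2.mono_set (uIcc_subset_uIcc (by rw [uIcc_of_le hT0.le]; exact ⟨ha0.le, haT⟩) right_mem_uIcc)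
    have l1 : ∫ t in a..T, ε ^ 2 ≤ ∫ t in a..T, ‖V t‖ ^ 2 := by
      refine intervalIntegral.integral_mono_ae_restrict haT (by simp) i3 ?_
      have h1 : ∀ᵐ t ∂(volume.restrict (Icc a T)), a ≤ t → ε ^ 2 ≤ ‖V t‖ ^ 2 :=
        ae_mono (Measure.restrict_mono (fun x hx => lt_of_lt_of_le ha0 hx.1) le_rfl) hae
      filter_upwards [h1, ae_restrict_mem measurableSet_Icc] with t h2 h3
      exact h2 h3.1
    have l2 : ∫ t in a..T, ‖V t‖ ^ 2 ≤ ∫ t in (0:ℝ)..T, ‖V t‖ ^ 2 := by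
      refine intervalIntegral.integral_mono_interval ha0.le haT le_rfl ?_ i2
      exact Eventually.of_forall fun t => by positivity
    rw [intervalIntegral.integral_const, smul_eq_mul, hT, add_sub_cancel_left,
      div_mul_cancel₀ _ (by positivity)] at l1
    have := hE T hT0
    have := hEnn (U T)
    linarith
  choose τ hτ1 hτ2 hτ3 hτ4 using hex
  have hτ0 : ∀ n, 0 < τ n := fun n => lt_of_lt_of_le (by positivity) (hτ1 n)
  obtain ⟨φ, hφ, hcau⟩ := hP R (fun n => U (τ n)) (fun n => hUR _ (hτ2 n) (hτ0 n))
  have hV0 : Tendsto (fun n => ‖V (τ (φ n))‖) atTop (𝓝 0) :=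
    squeeze_zero (fun _ => norm_nonneg _) (fun n => hτ3 (φ n))
      (tendsto_one_div_add_atTop_nhds_zero_nat.comp hφ.tendsto_atTop)
  have hR0 : 0 ≤ R := Real.sqrt_nonneg _
  have hUc : CauchySeq (fun n => U (τ (φ n))) := by
    rw [Metric.cauchySeq_iff] at hcau ⊢
    intro ε hε
    set δ := 2 * c * ε ^ 2 / (4 * R + 30 * R ^ 2 + 1) with hδ
    have hδ0 : 0 < δ := by positivity
    obtain ⟨N1, hN1⟩ := hcau δ hδ0
    obtain ⟨N2, hN2⟩ := eventually_atTop.1 (hV0.eventually_lt_const hδ0)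
    refine ⟨max N1 N2, fun m hm n hn => ?_⟩
    have := cauchy_est M P hM hpos R c (U (τ (φ m))) (U (τ (φ n))) (V (τ (φ m))) (V (τ (φ n)))
      (hUR _ (hτ2 _) (hτ0 _)) (hUR _ (hτ2 _) (hτ0 _)) (hcG _ (hτ2 _) (hτ0 _).le)
      (hτ4 _ _ (hUC _ (hτ0 _).le)) (hτ4 _ _ (hUC _ (hτ0 _).le))
    have d1 := hN1 m ((le_max_left _ _).trans hm) n ((le_max_left _ _).trans hn)
    have d2 := hN2 m ((le_max_right _ _).trans hm)
    have d3 := hN2 n ((le_max_right _ _).trans hn)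
    rw [dist_eq_norm] at d1 ⊢
    have e1 : 2 * R * (‖V (τ (φ m))‖ + ‖V (τ (φ n))‖) ≤ 2 * R * (δ + δ) := by gcongr
    have e2 : 30 * R ^ 2 * ‖P (U (τ (φ m))) - P (U (τ (φ n)))‖ ≤ 30 * R ^ 2 * δ := by gcongr
    have e3 : (4 * R + 30 * R ^ 2 + 1) * δ = 2 * c * ε ^ 2 := by
      rw [hδ]; field_simp
    have e4 : 2 * c * ‖U (τ (φ m)) - U (τ (φ n))‖ ^ 2 < 2 * c * ε ^ 2 := by nlinarith
    exact lt_of_pow_lt_pow_left₀ 2 hε.le (lt_of_mul_lt_mul_left e4 (by positivity))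
  obtain ⟨w, hw⟩ := cauchySeq_tendsto_of_complete hUc
  refine ⟨fun n => τ (φ n), fun n => (hτ0 _).le, ?_, w, ?_, hw, ?_⟩
  · have : Tendsto τ atTop atTop :=
      tendsto_atTop_mono (fun n => (by linarith [hτ1 n] : (n:ℝ) ≤ τ n)) tendsto_natCast_atTop_atTop
    exact this.comp hφ.tendsto_atTop
  · exact hcl.mem_of_tendsto hw (Eventually.of_forall fun n => hUC _ (hτ0 _).le)
  · intro z hz
    have hVv : Tendsto (fun n => V (τ (φ n))) atTop (𝓝 0) := tendsto_zero_iff_norm_tendsto_zero.2 hV0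
    have hzw : Tendsto (fun n => z - U (τ (φ n))) atTop (𝓝 (z - w)) := tendsto_const_nhds.sub hw
    have t1 := hVv.inner hzw (𝕜 := ℝ)
    have t2 := ((continuous_DD M P).tendsto (w, z - w)).comp (hw.prodMk_nhds hzw)
    have t3 := t1.add t2
    rw [inner_zero_left, zero_add] at t3
    exact ge_of_tendsto' t3 (fun n => hτ4 _ z hz)

end abstractFlow


abbrev mu01 : Measure ℝ := volume.restrict (Ioc (0:ℝ) 1)
abbrev LL := Lp ℝ 2 mu01

def ext01 (a : XX) (y : ℝ) : ℝ := a (projIcc 0 1 zero_le_one y)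

lemma continuous_ext01 (a : XX) : Continuous (ext01 a) := a.continuous.comp continuous_projIcc
lemma ext01_le (a : XX) (y : ℝ) : ‖ext01 a y‖ ≤ ‖a‖ := a.norm_coe_le_norm _
lemma ext01_eq (a : XX) (y : ℝ) (hy : y ∈ Icc (0:ℝ) 1) : ext01 a y = a ⟨y, hy⟩ := by
  rw [ext01, projIcc_of_mem _ hy]

lemma memLp_ext_mul (a : XX) (f : LL) : MemLp (fun y => ext01 a y * f y) 2 mu01 := by
  refine MemLp.of_le_mul (c := ‖a‖) (Lp.memLp f)
    ((continuous_ext01 a).aestronglyMeasurable.mul (Lp.memLp f).1) (Eventually.of_forall fun y => ?_)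
  rw [norm_mul]; gcongr; exact ext01_le a y

def mulL (a : XX) (f : LL) : LL := (memLp_ext_mul a f).toLp _

lemma mulL_coe (a : XX) (f : LL) : mulL a f =ᵐ[mu01] fun y => ext01 a y * f y :=
  (memLp_ext_mul a f).coeFn_toLp

lemma mulL_norm (a : XX) (f : LL) : ‖mulL a f‖ ≤ ‖a‖ * ‖f‖ := by
  refine Lp.norm_le_mul_norm_of_ae_le_mul ?_
  filter_upwards [mulL_coe a f] with y hy
  rw [hy, norm_mul]; gcongr; exact ext01_le a y

def MM : XX →L[ℝ] LL →L[ℝ] LL :=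
  LinearMap.mkContinuous₂ (LinearMap.mk₂ ℝ mulL
    (fun a b f => by
      apply Lp.ext
      filter_upwards [mulL_coe (a+b) f, mulL_coe a f, mulL_coe b f, Lp.coeFn_add (mulL a f) (mulL b f)]
        with y h1 h2 h3 h4
      rw [h4, Pi.add_apply, h1, h2, h3]; simp [ext01]; ring)
    (fun c a f => by
      apply Lp.ext
      filter_upwards [mulL_coe (c•a) f, mulL_coe a f, Lp.coeFn_smul c (mulL a f)] with y h1 h2 h3
      rw [h3, Pi.smul_apply, h1, h2]; simp [ext01]; ring)
    (fun a f g => by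
      apply Lp.ext
      filter_upwards [mulL_coe a (f+g), mulL_coe a f, mulL_coe a g,
        Lp.coeFn_add (mulL a f) (mulL a g), Lp.coeFn_add f g] with y h1 h2 h3 h4 h5
      rw [h4, Pi.add_apply, h1, h2, h3, h5, Pi.add_apply]; ring)
    (fun c a f => by
      apply Lp.ext
      filter_upwards [mulL_coe a (c • f), mulL_coe a f, Lp.coeFn_smul c (mulL a f),
        Lp.coeFn_smul c f] with y h1 h2 h3 h4
      rw [h3, Pi.smul_apply, h1, h2, h4, Pi.smul_apply]; simp; ring)) 1
    (fun a f => by rw [one_mul]; exact mulL_norm a f)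

lemma MM_apply (a : XX) (f : LL) : MM a f = mulL a f := rfl

lemma MM_norm (a : XX) (f : LL) : ‖MM a f‖ ≤ ‖a‖ * ‖f‖ := mulL_norm a f

lemma MM_inner (a : XX) (f h : LL) : inner ℝ (MM a f) h = ∫ y, ext01 a y * (f y * h y) ∂mu01 := by
  rw [L2.inner_def]
  apply integral_congr_ae
  filter_upwards [mulL_coe a f] with y hy
  rw [MM_apply, hy]; simp; ring

lemma MM_symm (a : XX) (f h : LL) : inner ℝ (MM a f) h = inner ℝ (MM a h) f := by
  rw [MM_inner, MM_inner]; congr 1; ext y; ring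

lemma LL_int_mul (f h : LL) : Integrable (fun y => f y * h y) mu01 :=
  (Lp.memLp f).integrable_mul (Lp.memLp h)

lemma LL_norm_sq (f : LL) : ‖f‖ ^ 2 = ∫ y, f y * f y ∂mu01 := by
  rw [← real_inner_self_eq_norm_sq, L2.inner_def]
  apply integral_congr_ae
  exact Eventually.of_forall fun y => by simp [sq]

lemma MM_pos (c : ℝ) (a : XX) (f : LL) (h : ∀ x, c ≤ a x) : c * ‖f‖ ^ 2 ≤ inner ℝ (MM a f) f := by
  rw [MM_inner, LL_norm_sq, ← integral_const_mul]
  refine integral_mono ((LL_int_mul f f).const_mul c) ?_ ?_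
  · exact (LL_int_mul f f).bdd_mul (c := ‖a‖) (continuous_ext01 a).aestronglyMeasurable
      (Eventually.of_forall fun y => ext01_le a y)
  · intro y
    exact mul_le_mul_of_nonneg_right (h _) (mul_self_nonneg _)

lemma LL_integrable (f : LL) : Integrable f mu01 := (Lp.memLp f).integrable (by norm_num)

lemma LL_ii (f : LL) {x y : ℝ} (hx : x ∈ Icc (0:ℝ) 1) (hy : y ∈ Icc (0:ℝ) 1) :
    IntervalIntegrable f volume x y := by
  have : IntervalIntegrable f volume 0 1 := by
    rw [intervalIntegrable_iff_integrableOn_Ioc_of_le zero_le_one]; exact LL_integrable f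
  exact this.mono_set (uIcc_subset_uIcc (by rw [uIcc_of_le zero_le_one]; exact hx)
    (by rw [uIcc_of_le zero_le_one]; exact hy))

lemma ii_est (f : LL) {x y : ℝ} (hx : x ∈ Icc (0:ℝ) 1) (hy : y ∈ Icc (0:ℝ) 1) (hxy : x ≤ y) :
    |∫ r in x..y, f r| ≤ Real.sqrt (y - x) * ‖f‖ := by
  have hfin : mu01 (Ioc x y) ≠ ⊤ := measure_ne_top _ _
  have h := L2.inner_indicatorConstLp_one (𝕜 := ℝ) (measurableSet_Ioc (a := x) (b := y)) hfin f
  have hsub : Ioc x y ⊆ Ioc 0 1 := Ioc_subset_Ioc hx.1 hy.2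
  have e : (∫ r in x..y, f r) = ∫ r in Ioc x y, f r ∂mu01 := by
    rw [intervalIntegral.integral_of_le hxy, Measure.restrict_restrict measurableSet_Ioc,
      inter_eq_left.2 hsub]
  rw [e, ← h]
  refine (abs_real_inner_le_norm _ _).trans ?_
  gcongr
  refine norm_indicatorConstLp_le.trans ?_
  have : mu01.real (Ioc x y) = y - x := by
    rw [measureReal_def, Measure.restrict_apply measurableSet_Ioc, inter_eq_left.2 hsub,
      Real.volume_Ioc, ENNReal.toReal_ofReal (by linarith)]
  rw [this, Real.sqrt_eq_rpow]
  simp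

lemma ii_est' (f : LL) {x y : ℝ} (hx : x ∈ Icc (0:ℝ) 1) (hy : y ∈ Icc (0:ℝ) 1) :
    |(∫ r in (0:ℝ)..x, f r) - ∫ r in (0:ℝ)..y, f r| ≤ Real.sqrt |x - y| * ‖f‖ := by
  have h0 : (0:ℝ) ∈ Icc (0:ℝ) 1 := by simp
  rw [intervalIntegral.integral_interval_sub_left (LL_ii f h0 hx) (LL_ii f h0 hy)]
  rcases le_total x y with h | h
  · rw [intervalIntegral.integral_symm, abs_neg, abs_sub_comm x y, abs_of_nonneg (by linarith : 0 ≤ y - x)]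
    exact ii_est f hx hy h
  · rw [abs_of_nonneg (by linarith : 0 ≤ x - y)]
    exact ii_est f hy hx h

lemma jcont (f : LL) : Continuous (fun x : Icc (0:ℝ) 1 => ∫ r in (0:ℝ)..x, f r) := by
  have := intervalIntegral.continuousOn_primitive_interval'
    (LL_ii f (x := 0) (y := 1) (by simp) (by simp)) left_mem_uIcc
  rw [uIcc_of_le zero_le_one] at this
  exact continuousOn_iff_continuous_domRestrict.1 this

def JJ (f : LL) : XX := BoundedContinuousFunction.mkOfCompact ⟨_, jcont f⟩

lemma JJ_apply (f : LL) (x : Icc (0:ℝ) 1) : JJ f x = ∫ r in (0:ℝ)..x, f r := rfl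

lemma JJ_norm (f : LL) : ‖JJ f‖ ≤ ‖f‖ := by
  rw [BoundedContinuousFunction.norm_le (norm_nonneg _)]
  intro x
  rw [JJ_apply, Real.norm_eq_abs]
  refine (ii_est f (by simp) x.2 x.2.1).trans ?_
  have : Real.sqrt (x - 0) ≤ 1 := by
    rw [Real.sqrt_le_iff]; exact ⟨by norm_num, by linarith [x.2.2]⟩
  nlinarith [norm_nonneg f]

lemma ii_congr {f g : ℝ → ℝ} (h : f =ᵐ[mu01] g) {x : ℝ} (hx : x ∈ Icc (0:ℝ) 1) :
    (∫ r in (0:ℝ)..x, f r) = ∫ r in (0:ℝ)..x, g r := by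
  rw [intervalIntegral.integral_of_le hx.1, intervalIntegral.integral_of_le hx.1]
  apply integral_congr_ae
  exact ae_mono (Measure.restrict_mono (Ioc_subset_Ioc_right hx.2) le_rfl) h

lemma JJ_add (f g : LL) : JJ (f + g) = JJ f + JJ g := by
  ext x
  have h0 : (0:ℝ) ∈ Icc (0:ℝ) 1 := by simp
  rw [BoundedContinuousFunction.coe_add, Pi.add_apply, JJ_apply, JJ_apply, JJ_apply,
    ii_congr (Lp.coeFn_add f g) x.2]
  exact intervalIntegral.integral_add (LL_ii f h0 x.2) (LL_ii g h0 x.2)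

lemma JJ_smul (c : ℝ) (f : LL) : JJ (c • f) = c • JJ f := by
  ext x
  change JJ (c • f) x = c • JJ f x
  rw [JJ_apply, JJ_apply,
    ii_congr (Lp.coeFn_smul c f) x.2]
  simp

lemma ext_ii (a : XX) (x y : ℝ) : IntervalIntegrable (ext01 a) volume x y :=
  (continuous_ext01 a).intervalIntegrable _ _

def QX (x : ℝ) : XX →L[ℝ] ℝ := LinearMap.mkContinuous
  { toFun := fun a => ∫ y in (0:ℝ)..x, ext01 a y
    map_add' := fun a b => by
      rw [← intervalIntegral.integral_add (ext_ii a _ _) (ext_ii b _ _)]; rfl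
    map_smul' := fun c a => by
      rw [RingHom.id_apply, smul_eq_mul, ← intervalIntegral.integral_const_mul]; rfl } |x|
  (fun a => by
    have := intervalIntegral.norm_integral_le_of_norm_le_const (a := 0) (b := x) (f := ext01 a)
      (C := ‖a‖) (fun y _ => ext01_le a y)
    rw [sub_zero, mul_comm] at this
    exact this)

lemma QX_apply (x : ℝ) (a : XX) : QX x a = ∫ y in (0:ℝ)..x, ext01 a y := rfl

lemma QX_le (x : ℝ) (hx : x ∈ Icc (0:ℝ) 1) (a : XX) : |QX x a| ≤ ‖a‖ := by
  have := intervalIntegral.norm_integral_le_of_norm_le_const (a := 0) (b := x) (f := ext01 a)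
      (C := ‖a‖) (fun y _ => ext01_le a y)
  rw [sub_zero, abs_of_nonneg hx.1] at this
  rw [QX_apply]
  refine this.trans ?_
  nlinarith [norm_nonneg a, hx.2]

def PP : LL →L[ℝ] XX := LinearMap.mkContinuous
  { toFun := fun f => JJ f - BoundedContinuousFunction.const _ (QX 1 (JJ f))
    map_add' := fun f g => by
      rw [JJ_add, map_add]; ext x; simp; ring
    map_smul' := fun c f => by
      rw [JJ_smul, map_smul]; ext x; simp; ring } 2
  (fun f => by
    have h1 := JJ_norm f
    have h2 := QX_le 1 (by simp) (JJ f)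
    have h3 : ‖(BoundedContinuousFunction.const (Icc (0:ℝ) 1) (QX 1 (JJ f)))‖ ≤ |QX 1 (JJ f)| :=
      BoundedContinuousFunction.norm_const_le _
    have := norm_sub_le (JJ f) (BoundedContinuousFunction.const (Icc (0:ℝ) 1) (QX 1 (JJ f)))
    change ‖JJ f - BoundedContinuousFunction.const _ (QX 1 (JJ f))‖ ≤ _
    linarith)

lemma PP_apply (f : LL) (x : Icc (0:ℝ) 1) :
    PP f x = (∫ r in (0:ℝ)..x, f r) - QX 1 (JJ f) := rfl

lemma PP_norm (f : LL) : ‖PP f‖ ≤ 2 * ‖f‖ := by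
  refine (PP.le_opNorm f).trans ?_
  gcongr
  exact LinearMap.mkContinuous_norm_le _ (by norm_num) _

lemma PP_compact (R : ℝ) (f : ℕ → LL) (hf : ∀ n, ‖f n‖ ≤ R) : ∃ φ : ℕ → ℕ, StrictMono φ ∧
      CauchySeq (fun n => PP (f (φ n))) := by
  have hR : 0 ≤ R := (norm_nonneg _).trans (hf 0)
  have hc : IsCompact (closure (range (fun n => PP (f n)))) := by
    refine BoundedContinuousFunction.arzela_ascoli (Icc (-(2*R)) (2*R)) isCompact_Icc _ ?_ ?_
    · rintro _ x ⟨n, rfl⟩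
      have := (PP (f n)).norm_coe_le_norm x
      have := PP_norm (f n)
      have := hf n
      rw [mem_Icc, ← abs_le]
      simp only [Real.norm_eq_abs] at *
      linarith
    · refine Metric.equicontinuous_of_continuity_modulus (fun r => Real.sqrt r * R) ?_ _ ?_
      · have : Continuous (fun r => Real.sqrt r * R) := by fun_prop
        simpa using this.tendsto 0
      · rintro x y ⟨_, n, rfl⟩
        change dist (PP (f n) x) (PP (f n) y) ≤ _
        rw [PP_apply, PP_apply, dist_sub_right, Real.dist_eq, Subtype.dist_eq, Real.dist_eq]
        exact (ii_est' (f n) x.2 y.2).trans (by gcongr; exact hf n)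
  obtain ⟨a, _, φ, hφ, h⟩ := hc.tendsto_subseq (x := fun n => PP (f n))
    (fun n => subset_closure (mem_range_self n))
  exact ⟨φ, hφ, h.cauchySeq⟩

lemma LL_zero_of_QX (f : LL) (h : ∀ x ∈ Icc (0:ℝ) 1, QX x (PP f) = 0) : f = 0 := by
  have h1 : ∀ x ∈ Ioo (0:ℝ) 1, ext01 (PP f) x = 0 := by
    intro x hx
    have hd : HasDerivAt (fun x => QX x (PP f)) (ext01 (PP f) x) x :=
      intervalIntegral.integral_hasDerivAt_right (ext_ii _ _ _)
        ((continuous_ext01 _).stronglyMeasurableAtFilter _ _) (continuous_ext01 _).continuousAt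
    have h0 : HasDerivAt (fun x => QX x (PP f)) 0 x :=
      (hasDerivAt_const x (0:ℝ)).congr_of_eventuallyEq (by
        filter_upwards [Ioo_mem_nhds hx.1 hx.2] with y hy
        exact h y (Ioo_subset_Icc_self hy))
    exact hd.unique h0
  have h2 : ∀ x ∈ Ioo (0:ℝ) 1, (∫ r in (0:ℝ)..x, f r) = QX 1 (JJ f) := by
    intro x hx
    have := h1 x hx
    rw [ext01_eq _ _ (Ioo_subset_Icc_self hx), PP_apply] at this
    simpa using sub_eq_zero.1 this
  apply Lp.ext
  have h3 := (LL_ii f (x := 0) (y := 1) (by simp) (by simp)).ae_hasDerivAt_integral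
  rw [uIcc_of_le zero_le_one] at h3
  have h4 : ∀ᵐ x : ℝ, x ≠ 1 := by simp [ae_iff, measure_singleton]
  filter_upwards [ae_restrict_of_ae h3, ae_restrict_of_ae h4, ae_restrict_mem measurableSet_Ioc,
    Lp.coeFn_zero ℝ 2 mu01] with x hx1 hx2 hx3 hx4
  have hx : x ∈ Ioo (0:ℝ) 1 := ⟨hx3.1, lt_of_le_of_ne hx3.2 hx2⟩
  have hd := hx1 (Ioo_subset_Icc_self hx) 0 (by simp)
  have h0 : HasDerivAt (fun x => ∫ r in (0:ℝ)..x, f r) 0 x :=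
      (hasDerivAt_const x (QX 1 (JJ f))).congr_of_eventuallyEq (by
        filter_upwards [Ioo_mem_nhds hx.1 hx.2] with y hy
        exact h2 y hy)
  rw [hx4, hd.unique h0]; rfl

lemma MemH.memLp {u u1 u2 : ℝ → ℝ} (h : MemH u u1 u2) : MemLp u2 2 mu01 := by
  obtain ⟨-, -, h3, h4, -, -⟩ := h
  have h3' : Integrable u2 mu01 := h3.mono_set Ioc_subset_Icc_self
  exact (memLp_two_iff_integrable_sq h3'.1).2 (h4.mono_set Ioc_subset_Icc_self)

def clsL (u2 : ℝ → ℝ) : LL := by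
  classical exact if h : MemLp u2 2 mu01 then h.toLp u2 else 0

lemma clsL_eq {u2 : ℝ → ℝ} (h : MemLp u2 2 mu01) : clsL u2 = h.toLp u2 := by
  rw [clsL, dif_pos h]

lemma clsL_coe {u2 : ℝ → ℝ} (h : MemLp u2 2 mu01) : clsL u2 =ᵐ[mu01] u2 := by
  rw [clsL_eq h]; exact h.coeFn_toLp

lemma clsL_sub {u2 v2 : ℝ → ℝ} (h : MemLp u2 2 mu01) (k : MemLp v2 2 mu01) :
    clsL (fun x => u2 x - v2 x) = clsL u2 - clsL v2 := by
  have hk : MemLp (fun x => u2 x - v2 x) 2 mu01 := h.sub k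
  rw [clsL_eq h, clsL_eq k, clsL_eq hk, ← MemLp.toLp_sub]
  rfl

lemma clsL_smul {u2 : ℝ → ℝ} (h : MemLp u2 2 mu01) (c : ℝ) :
    clsL (fun x => u2 x / c) = c⁻¹ • clsL u2 := by
  have e : (fun x => u2 x / c) = c⁻¹ • u2 := by ext x; simp [div_eq_inv_mul]
  rw [e, clsL_eq h, clsL_eq (h.const_smul c⁻¹), ← MemLp.toLp_const_smul]

lemma clsL_norm_sq {u2 : ℝ → ℝ} (h : MemLp u2 2 mu01) :
    ‖clsL u2‖ ^ 2 = ∫ x in (0:ℝ)..1, (u2 x) ^ 2 := by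
  rw [LL_norm_sq, intervalIntegral.integral_of_le zero_le_one]
  apply integral_congr_ae
  filter_upwards [clsL_coe h] with x hx
  rw [hx]; ring

lemma clsL_Hnorm {u2 : ℝ → ℝ} (h : MemLp u2 2 mu01) : Hnorm u2 = ‖clsL u2‖ := by
  rw [Hnorm, ← clsL_norm_sq h, Real.sqrt_sq (norm_nonneg _)]

lemma clsL_Hip {u2 v2 : ℝ → ℝ} (h : MemLp u2 2 mu01) (k : MemLp v2 2 mu01) :
    Hip u2 v2 = inner ℝ (clsL u2) (clsL v2) := by
  rw [Hip, L2.inner_def, intervalIntegral.integral_of_le zero_le_one]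
  apply integral_congr_ae
  filter_upwards [clsL_coe h, clsL_coe k] with x hx hk
  rw [hx, hk]; simp; ring

lemma MemH.u1_cont {u u1 u2 : ℝ → ℝ} (h : MemH u u1 u2) : ContinuousOn u1 (Icc 0 1) := by
  have hi : IntervalIntegrable u2 volume 0 1 := by
    rw [intervalIntegrable_iff_integrableOn_Icc_of_le zero_le_one]; exact h.2.2.1
  have := intervalIntegral.continuousOn_primitive_interval' hi left_mem_uIcc
  rw [uIcc_of_le zero_le_one] at this
  exact (continuousOn_const.add this).congr h.2.1

lemma MemH.u_eq {u u1 u2 : ℝ → ℝ} (h : MemH u u1 u2) {x : ℝ} (hx : x ∈ Icc (0:ℝ) 1) :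
    u x = ∫ y in (0:ℝ)..x, u1 y := by
  have hsub : Icc 0 x ⊆ Icc (0:ℝ) 1 := Icc_subset_Icc_right hx.2
  have := intervalIntegral.integral_eq_sub_of_hasDerivAt_of_le hx.1
    (f := u) (f' := u1) (fun y hy => ((h.1 y (hsub hy)).continuousWithinAt).mono hsub)
    (fun y hy => (h.1 y (hsub (Ioo_subset_Icc_self hy))).hasDerivAt
      (Icc_mem_nhds hy.1 (hy.2.trans_le hx.2)))
    (by
      rw [intervalIntegrable_iff_integrableOn_Icc_of_le hx.1]
      exact (h.u1_cont.mono hsub).integrableOn_Icc)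
  rw [this, h.2.2.2.2.1, sub_zero]

lemma ext_int_congr {a : XX} {w : ℝ → ℝ} (h : ∀ x (hx : x ∈ Icc (0:ℝ) 1), a ⟨x, hx⟩ = w x)
    {x : ℝ} (hx : x ∈ Icc (0:ℝ) 1) : QX x a = ∫ y in (0:ℝ)..x, w y := by
  rw [QX_apply]
  apply intervalIntegral.integral_congr
  intro y hy
  rw [uIcc_of_le hx.1] at hy
  have hy' : y ∈ Icc (0:ℝ) 1 := ⟨hy.1, hy.2.trans hx.2⟩
  rw [ext01_eq _ _ hy', h]

lemma MemH.P_eq {u u1 u2 : ℝ → ℝ} (h : MemH u u1 u2) {x : ℝ} (hx : x ∈ Icc (0:ℝ) 1) :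
    PP (clsL u2) ⟨x, hx⟩ = u1 x := by
  have hj : ∀ x (hx : x ∈ Icc (0:ℝ) 1), JJ (clsL u2) ⟨x, hx⟩ = u1 x - u1 0 := by
    intro x hx
    rw [JJ_apply, ii_congr (clsL_coe h.memLp) hx, h.2.1 x hx]; ring
  have h1 : (1:ℝ) ∈ Icc (0:ℝ) 1 := by simp
  have hq : QX 1 (JJ (clsL u2)) = - u1 0 := by
    rw [ext_int_congr hj h1, intervalIntegral.integral_sub, ← h.u_eq h1, h.2.2.2.2.2]
    · simp
    · rw [intervalIntegrable_iff_integrableOn_Icc_of_le zero_le_one]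
      exact h.u1_cont.integrableOn_Icc
    · simp
  have := hj x hx
  rw [JJ_apply] at this
  rw [PP_apply, this, hq]; ring

lemma MemH.Q_eq {u u1 u2 : ℝ → ℝ} (h : MemH u u1 u2) {x : ℝ} (hx : x ∈ Icc (0:ℝ) 1) :
    QX x (PP (clsL u2)) = u x := by
  rw [ext_int_congr (fun x hx => h.P_eq hx) hx, h.u_eq hx]

lemma MemH.sub {u u1 u2 v v1 v2 : ℝ → ℝ} (h : MemH u u1 u2) (k : MemH v v1 v2) :
    MemH (fun x => u x - v x) (fun x => u1 x - v1 x) (fun x => u2 x - v2 x) := by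
  have hm := h.memLp.sub k.memLp
  refine ⟨fun x hx => (h.1 x hx).sub (k.1 x hx), fun x hx => ?_, h.2.2.1.sub k.2.2.1, ?_, ?_, ?_⟩
  · have hii : ∀ {w : ℝ → ℝ}, IntegrableOn w (Icc 0 1) → IntervalIntegrable w volume 0 x :=
      fun hw => by
        rw [intervalIntegrable_iff_integrableOn_Icc_of_le hx.1]
        exact hw.mono_set (Icc_subset_Icc_right hx.2)
    simp only
    rw [intervalIntegral.integral_sub (hii h.2.2.1) (hii k.2.2.1), h.2.1 x hx, k.2.1 x hx]; ring
  · rw [integrableOn_Icc_iff_integrableOn_Ioc]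
    exact hm.integrable_sq
  · simp [h.2.2.2.2.1, k.2.2.2.2.1]
  · simp [h.2.2.2.2.2, k.2.2.2.2.2]

lemma elDE_eq {u u1 u2 φ φ1 φ2 : ℝ → ℝ} (h : MemH u u1 u2) (k : MemH φ φ1 φ2) :
    elDE u1 u2 φ1 φ2 = DD MM PP (clsL u2) (clsL φ2) := by
  rw [elDE, DD, MM_inner, MM_inner, intervalIntegral.integral_of_le zero_le_one,
    intervalIntegral.integral_of_le zero_le_one, sub_eq_add_neg, ← neg_mul, ← integral_const_mul (-5)]
  congr 1
  · congr 1
    apply integral_congr_ae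
    filter_upwards [clsL_coe h.memLp, clsL_coe k.memLp, ae_restrict_mem measurableSet_Ioc]
      with x h1 h2 h3
    have hx := Ioc_subset_Icc_self h3
    rw [h1, h2, ext01_eq _ _ hx, GG_apply, h.P_eq hx, gg]
    ring
  · apply integral_congr_ae
    filter_upwards [clsL_coe h.memLp, clsL_coe k.memLp, ae_restrict_mem measurableSet_Ioc]
      with x h1 h2 h3
    have hx := Ioc_subset_Icc_self h3
    rw [h1, ext01_eq _ _ hx, BoundedContinuousFunction.coe_mul, Pi.mul_apply, GG1_apply, h.P_eq hx,
      k.P_eq hx, gg1]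
    ring

lemma MemH.int_le {d d1 d2 : ℝ → ℝ} (h : MemH d d1 d2) :
    0 ≤ (∫ x in (0:ℝ)..1, ((d x) ^ 2 + (d1 x) ^ 2 + (d2 x) ^ 2)) ∧
    (∫ x in (0:ℝ)..1, ((d x) ^ 2 + (d1 x) ^ 2 + (d2 x) ^ 2)) ≤ 9 * ‖clsL d2‖ ^ 2 := by
  constructor
  · exact intervalIntegral.integral_nonneg zero_le_one (fun x _ => by positivity)
  · have hP := PP_norm (clsL d2)
    have b1 : ∀ x ∈ Icc (0:ℝ) 1, (d1 x) ^ 2 ≤ 4 * ‖clsL d2‖ ^ 2 := fun x hx => by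
      have := XX_abs_le (PP (clsL d2)) ⟨x, hx⟩
      rw [h.P_eq hx] at this
      have := pow_le_pow_left₀ (abs_nonneg _) (this.trans hP) 2
      rw [sq_abs] at this; linarith
    have b0 : ∀ x ∈ Icc (0:ℝ) 1, (d x) ^ 2 ≤ 4 * ‖clsL d2‖ ^ 2 := fun x hx => by
      have := QX_le x hx (PP (clsL d2))
      rw [h.Q_eq hx] at this
      have := pow_le_pow_left₀ (abs_nonneg _) (this.trans hP) 2
      rw [sq_abs] at this; linarith
    have cd : ContinuousOn d (Icc 0 1) := fun x hx => (h.1 x hx).continuousWithinAt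
    have i2 : IntervalIntegrable (fun x => (d2 x) ^ 2) volume 0 1 := by
      rw [intervalIntegrable_iff_integrableOn_Icc_of_le zero_le_one]; exact h.2.2.2.1
    have i01 : IntervalIntegrable (fun x => (d x) ^ 2 + (d1 x) ^ 2) volume 0 1 := by
      rw [intervalIntegrable_iff_integrableOn_Icc_of_le zero_le_one]
      exact ((cd.pow 2).add (h.u1_cont.pow 2)).integrableOn_Icc
    rw [intervalIntegral.integral_add i01 i2, ← clsL_norm_sq h.memLp]
    have : (∫ x in (0:ℝ)..1, ((d x) ^ 2 + (d1 x) ^ 2)) ≤ ∫ x in (0:ℝ)..1, 8 * ‖clsL d2‖ ^ 2 :=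
      intervalIntegral.integral_mono_on zero_le_one i01 (by simp)
        (fun x hx => by linarith [b0 x hx, b1 x hx])
    simp at this
    linarith

def CC (ψ : ℝ → ℝ) : Set LL := {f | ∀ x ∈ Icc (0:ℝ) 1, ψ x ≤ QX x (PP f)}

lemma isClosed_CC (ψ : ℝ → ℝ) : IsClosed (CC ψ) := by
  simp only [CC, setOf_forall]
  refine isClosed_iInter fun x => isClosed_iInter fun _ => ?_
  exact isClosed_le continuous_const ((QX x).continuous.comp PP.continuous)

lemma MemC.mem_CC {ψ u u1 u2 : ℝ → ℝ} (hψ : ContinuousOn ψ (Icc 0 1)) (h : MemC ψ u u1 u2) :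
    clsL u2 ∈ CC ψ := by
  have cu : ContinuousOn u (Icc 0 1) := fun x hx => (h.1.1 x hx).continuousWithinAt
  have hae : (fun x => min (ψ x) (u x)) =ᵐ[volume.restrict (Icc (0:ℝ) 1)] ψ := by
    filter_upwards [h.2] with x hx
    exact min_eq_left hx
  have := Measure.eqOn_Icc_of_ae_eq volume zero_ne_one hae (continuous_min.comp_continuousOn (hψ.prodMk cu)) hψ
  intro x hx
  rw [h.1.Q_eq hx]
  exact min_eq_left_iff.1 (this hx)

lemma memH_of_LL (f : LL) : MemH (fun x => QX x (PP f)) (ext01 (PP f)) f := by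
  have h0 : (0:ℝ) ∈ Icc (0:ℝ) 1 := by simp
  have h1 : (1:ℝ) ∈ Icc (0:ℝ) 1 := by simp
  refine ⟨fun x _ => ?_, fun x hx => ?_, ?_, ?_, ?_, ?_⟩
  · have hd : HasDerivAt (fun x => QX x (PP f)) (ext01 (PP f) x) x :=
      intervalIntegral.integral_hasDerivAt_right (ext_ii _ _ _)
        ((continuous_ext01 _).stronglyMeasurableAtFilter _ _) (continuous_ext01 _).continuousAt
    exact hd.hasDerivWithinAt
  · rw [ext01_eq _ _ hx, ext01_eq _ _ h0, PP_apply, PP_apply]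
    simp; ring
  · rw [integrableOn_Icc_iff_integrableOn_Ioc]; exact LL_integrable f
  · rw [integrableOn_Icc_iff_integrableOn_Ioc]; exact (Lp.memLp f).integrable_sq
  · simp [QX_apply]
  · have e : PP f = JJ f - BoundedContinuousFunction.const _ (QX 1 (JJ f)) := rfl
    simp only
    rw [e, map_sub, QX_apply 1 (BoundedContinuousFunction.const _ _)]
    simp [ext01]

lemma clsL_self (f : LL) : clsL f = f := by
  rw [clsL_eq (Lp.memLp f), Lp.toLp_coeFn]

lemma memC_of_CC {ψ : ℝ → ℝ} {f : LL} (h : f ∈ CC ψ) :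
    MemC ψ (fun x => QX x (PP f)) (ext01 (PP f)) f := by
  refine ⟨memH_of_LL f, ?_⟩
  filter_upwards [ae_restrict_mem measurableSet_Icc] with x hx
  exact h x hx


/-- **Subconvergence behavior of the elastic flow.** Let `ψ` be a continuous obstacle with
`ψ(0), ψ(1) < 0` which is `C¹` near the boundary, and let `(u(t))_{t≥0}` be the Obstacle
Gradient Flow for the elastic energy starting at `u₀ ∈ W^{3,∞}(0,1) ∩ H` with
`u₀''(0) = u₀''(1) = 0`. Then either (1) there is a sequence `θ_n → ∞` with
`‖u(θ_n)'‖_∞ → ∞`, or (2) there are `θ_n → ∞` and `u_∞ ∈ C` with `u(θ_n) → u_∞` in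
`W^{2,2}(0,1)` and `(∇E(u_∞), z - u_∞) ≥ 0` for all `z ∈ C`. -/
theorem elastic_flow_subconvergence
    (ψ : ℝ → ℝ) (hψcont : ContinuousOn ψ (Icc 0 1)) (hψ0 : ψ 0 < 0) (hψ1 : ψ 1 < 0)
    (hψC1 : ∃ η : ℝ, 0 < η ∧
      ContDiffOn ℝ 1 ψ (Icc 0 η) ∧ ContDiffOn ℝ 1 ψ (Icc (1 - η) 1))
    (u₀ u₀1 u₀2 u₀3 : ℝ → ℝ)
    (hu₀C : MemC ψ u₀ u₀1 u₀2)
    (hu₀W3 : ∀ x ∈ Icc (0:ℝ) 1, u₀2 x = u₀2 0 + ∫ y in (0:ℝ)..x, u₀3 y)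
    (hu₀W3inf : ∃ M : ℝ, ∀ x ∈ Icc (0:ℝ) 1, |u₀3 x| ≤ M)
    (hNav0 : u₀2 0 = 0) (hNav1 : u₀2 1 = 0)
    (u u1 u2 v v1 v2 : ℝ → ℝ → ℝ)
    (hflow : IsOGFel ψ u u1 u2 v v1 v2 u₀ u₀1 u₀2) :
    (∃ θ : ℕ → ℝ, (∀ n, 0 ≤ θ n) ∧ Filter.Tendsto θ Filter.atTop Filter.atTop ∧
      Filter.Tendsto (fun n => ⨆ x : Icc (0:ℝ) 1, |u1 (θ n) x|)
        Filter.atTop Filter.atTop) ∨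
    (∃ θ : ℕ → ℝ, (∀ n, 0 ≤ θ n) ∧ Filter.Tendsto θ Filter.atTop Filter.atTop ∧
      ∃ w w1 w2 : ℝ → ℝ, MemC ψ w w1 w2 ∧
        Filter.Tendsto (fun n => ∫ x in (0:ℝ)..1,
            ((u (θ n) x - w x) ^ 2 + (u1 (θ n) x - w1 x) ^ 2 + (u2 (θ n) x - w2 x) ^ 2))
          Filter.atTop (nhds 0) ∧
        ∀ z z1 z2 : ℝ → ℝ, MemC ψ z z1 z2 →
          0 ≤ elDE w1 w2 (fun x => z1 x - w1 x) (fun x => z2 x - w2 x)) := by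
  have hmH : ∀ t, 0 ≤ t → MemH (u t) (u1 t) (u2 t) := fun t ht => (hflow.memC t ht).1
  by_cases hbdd : ∃ T0 R0 : ℝ, ∀ t, T0 ≤ t → 0 ≤ t → ∀ x (hx : x ∈ Icc (0:ℝ) 1), |u1 t x| ≤ R0
  · right
    obtain ⟨T0, R0, hbd⟩ := hbdd
    set U : ℝ → LL := fun t => clsL (u2 t) with hU
    set V : ℝ → LL := fun t => clsL (v2 t) with hV
    have hder : ∀ᵐ t ∂(volume.restrict (Ioi (0:ℝ))), HasDerivAt U (V t) t := by
      filter_upwards [hflow.derivAe, hflow.vMemH, ae_restrict_mem measurableSet_Ioi] with t h1 h2 ht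
      rw [hasDerivAt_iff_tendsto_slope_zero, tendsto_iff_norm_sub_tendsto_zero]
      refine h1.congr' ?_
      have ev : ∀ᶠ h : ℝ in 𝓝[≠] 0, -t < h := by
        apply eventually_nhdsWithin_of_eventually_nhds
        exact lt_mem_nhds (by simpa using ht)
      filter_upwards [ev] with h hh
      have m1 := (hmH (t + h) (by linarith)).memLp
      have m2 := (hmH t (le_of_lt ht)).memLp
      have m3 : MemLp (fun x => u2 (t + h) x - u2 t x) 2 mu01 := m1.sub m2
      have m4 : MemLp (fun x => (u2 (t + h) x - u2 t x) / h) 2 mu01 := by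
        simpa [div_eq_mul_inv] using m3.mul_const h⁻¹
      have m5 : MemLp (fun x => (u2 (t + h) x - u2 t x) / h - v2 t x) 2 mu01 := m4.sub h2.memLp
      rw [clsL_Hnorm m5, clsL_sub m4 h2.memLp, clsL_smul m3, clsL_sub m1 m2]
    have hV2 : ∀ T, 0 < T → IntervalIntegrable (fun t => ‖V t‖ ^ 2) volume 0 T := by
      intro T hT
      rw [intervalIntegrable_iff_integrableOn_Ioc_of_le hT.le]
      refine (hflow.sqInt T hT).congr ?_
      have := ae_mono (Measure.restrict_mono (Ioc_subset_Ioi_self : Ioc (0:ℝ) T ⊆ Ioi 0) le_rfl)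
        hflow.vMemH
      filter_upwards [this] with t ht
      exact (clsL_norm_sq ht.memLp).symm
    have hVm : AEStronglyMeasurable V (volume.restrict (Ioi (0:ℝ))) :=
      (aestronglyMeasurable_deriv U _).congr (by
        filter_upwards [hder] with t ht
        exact ht.deriv)
    have hVi : ∀ T, 0 < T → IntervalIntegrable V volume 0 T := by
      intro T hT
      have h2 := hV2 T hT
      rw [intervalIntegrable_iff_integrableOn_Ioc_of_le hT.le] at h2 ⊢
      have h3 : IntegrableOn (fun t => 1 + ‖V t‖ ^ 2) (Ioc 0 T) := (by simp : IntegrableOn (fun _ => (1:ℝ)) (Ioc 0 T)).add h2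
      refine Integrable.mono' h3 (hVm.mono_measure (Measure.restrict_mono Ioc_subset_Ioi_self le_rfl)) ?_
      exact Eventually.of_forall fun t => by nlinarith [sq_nonneg (‖V t‖ - 1)]
    have hftc : ∀ s t, 0 ≤ s → s ≤ t → U t - U s = ∫ r in s..t, V r := by
      intro s t hs hst
      rw [← sub_eq_zero]
      apply LL_zero_of_QX
      intro x hx
      have hVst : IntervalIntegrable V volume s t := by
        have ht1 : 0 < t + 1 := by linarith
        refine (hVi (t + 1) ht1).mono_set (uIcc_subset_uIcc ?_ ?_) <;> rw [uIcc_of_le ht1.le]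
        · exact ⟨hs, by linarith⟩
        · exact ⟨by linarith, by linarith⟩
      have e1 : ((QX x).comp PP) (∫ r in s..t, V r) = ∫ r in s..t, ((QX x).comp PP) (V r) :=
        (ContinuousLinearMap.intervalIntegral_comp_comm _ hVst).symm
      have e2 : ∫ r in s..t, ((QX x).comp PP) (V r) = ∫ r in s..t, v r x := by
        rw [intervalIntegral.integral_of_le hst, intervalIntegral.integral_of_le hst]
        apply integral_congr_ae
        have := ae_mono (Measure.restrict_mono
          (fun y hy => lt_of_le_of_lt hs hy.1 : Ioc s t ⊆ Ioi (0:ℝ)) le_rfl) hflow.vMemH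
        filter_upwards [this] with r hr
        exact hr.Q_eq hx
      rw [map_sub, map_sub, map_sub, map_sub]
      rw [show QX x (PP (∫ r in s..t, V r)) = _ from e1, e2, ← hflow.ftc s t hs hst x hx,
        (hmH t (hs.trans hst)).Q_eq hx, (hmH s hs).Q_eq hx, sub_self]
    have hfvi : ∀ᵐ t ∂(volume.restrict (Ioi (0:ℝ))), ∀ z ∈ CC ψ,
        0 ≤ inner ℝ (V t) (z - U t) + DD MM PP (U t) (z - U t) := by
      filter_upwards [hflow.fvi, hflow.vMemH, ae_restrict_mem measurableSet_Ioi] with t h1 h2 ht z hz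
      have hz' := memC_of_CC hz
      have hu := hmH t (le_of_lt ht)
      have := h1 _ _ _ hz'
      have hd := hz'.1.sub hu
      rw [elDE_eq hu hd, clsL_Hip h2.memLp hd.memLp, clsL_sub hz'.1.memLp hu.memLp, clsL_self] at this
      exact this
    obtain ⟨θ, hθ0, hθ, w, hw, hconv, hvi⟩ := abs_flow MM PP MM_norm MM_symm MM_pos PP_compact (CC ψ)
      (isClosed_CC ψ) U V (fun t ht => (hflow.memC t ht).mem_CC hψcont) hder hVi hV2 hftc hfvi T0 R0
      (fun t h1 h2 x => by
        have := (hmH t h2).P_eq x.2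
        rw [hU]; simp only
        rw [this]; exact hbd t h1 h2 x x.2)
    have hwC := memC_of_CC hw
    refine ⟨θ, hθ0, hθ, _, _, _, hwC, ?_, ?_⟩
    · have h1 : Tendsto (fun n => 9 * ‖U (θ n) - w‖ ^ 2) atTop (𝓝 0) := by
        have := ((tendsto_iff_norm_sub_tendsto_zero.1 hconv).pow 2).const_mul 9
        simpa using this
      have hd : ∀ n, MemH _ _ _ := fun n => (hmH (θ n) (hθ0 n)).sub hwC.1
      refine squeeze_zero (fun n => (hd n).int_le.1) (fun n => ?_) h1
      have := (hd n).int_le.2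
      rw [clsL_sub (hmH (θ n) (hθ0 n)).memLp hwC.1.memLp, clsL_self] at this
      exact this
    · intro z z1 z2 hz
      rw [elDE_eq hwC.1 (hz.1.sub hwC.1), clsL_sub hz.1.memLp hwC.1.memLp, clsL_self]
      exact hvi _ (hz.mem_CC hψcont)
  · left
    push Not at hbdd
    choose τ hτ1 hτ2 x hx hτ3 using fun n : ℕ => hbdd n n
    refine ⟨τ, hτ2, tendsto_atTop_mono hτ1 tendsto_natCast_atTop_atTop,
      tendsto_atTop_mono (fun n => ?_) tendsto_natCast_atTop_atTop⟩
    refine (hτ3 n).le.trans ?_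
    refine le_ciSup (f := fun y : Icc (0:ℝ) 1 => |u1 (τ n) y|) ?_ ⟨x n, hx n⟩
    refine ⟨‖PP (clsL (u2 (τ n)))‖, ?_⟩
    rintro _ ⟨y, rfl⟩
    have := XX_abs_le (PP (clsL (u2 (τ n)))) y
    rwa [(hmH _ (hτ2 n)).P_eq y.2] at this
end
end
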